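/- arXiv:2505.13781 — 2 statements merged into one kernel-verified Lean document; each statement's English description precedes it below -/
import Mathlib

section
/- Let ĉ : 𝔽₂³ ∖ {0} → {1, 2} be the colouring that assigns colour 1 to the three standard basis vectors of 𝔽₂³ and colour 2 to the other four nonzero vectors. There exists a constant C > 0 such that for every n ∈ ℕ and every colouring c : 𝔽₂ⁿ ∖ {0} → {1, 2} for which there is no injective linear map φ : 𝔽₂³ → 𝔽₂ⁿ satisfying c(φ(v)) = ĉ(v) for all nonzero v ∈ 𝔽₂³, there is a linear subspace W of 𝔽₂ⁿ with dim W ≥ C·n^{1/7} on whose nonzero vectors c is constant. -/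
open Classical in
/-- The claw colouring of the Fano plane: the nonzero vectors of `𝔽₂³` are coloured
with colour `0` on the three standard basis vectors and colour `1` elsewhere. -/
noncomputable def clawColouring : (Fin 3 → ZMod 2) → Fin 2 :=
  fun v => if ∃ i : Fin 3, v = Pi.single i 1 then 0 else 1

namespace Claw

section basics
variable {V : Type*} [AddCommGroup V] [Module (ZMod 2) V]

theorem c2 (x : V) : x + x = 0 := ZModModule.add_self x

theorem eq_of_add_eq_zero2 {x y : V} (h : x + y = 0) : x = y := by
  have := c2 y
  grind

theorem zmod_cases (a : ZMod 2) : a = 0 ∨ a = 1 := by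
  revert a; decide

/-- Build a subspace over `𝔽₂` from closure under addition. -/
def mkSub (S : Set V) (h0 : (0 : V) ∈ S) (hadd : ∀ x ∈ S, ∀ y ∈ S, x + y ∈ S) :
    Submodule (ZMod 2) V where
  carrier := S
  zero_mem' := h0
  add_mem' := fun {x y} hx hy => hadd x hx y hy
  smul_mem' := fun a x hx => by
    rcases zmod_cases a with rfl | rfl
    · simpa using h0
    · simpa using hx

theorem mem_mkSub {S : Set V} {h0 : (0 : V) ∈ S} {hadd : ∀ x ∈ S, ∀ y ∈ S, x + y ∈ S} {x : V} :
    x ∈ mkSub S h0 hadd ↔ x ∈ S := Iff.rfl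

theorem mem2 {W : Submodule (ZMod 2) V} {x y z : V} (hx : x ∈ W) (hy : y ∈ W)
    (h : x + y = z) : z ∈ W := h ▸ W.add_mem hx hy

theorem span_ind {s : Set V} {p : V → Prop} (hadd : ∀ x ∈ s, ∀ v, p v → p (v + x))
    {v : V} (hv : v ∈ Submodule.span (ZMod 2) s) : ∀ u, p u → p (u + v) := by
  induction hv using Submodule.span_induction with
  | mem x hx => exact fun u hu => hadd x hx u hu
  | zero => intro u hu; simpa using hu
  | add x y _ _ ihx ihy =>
    intro u hu
    have := ihy _ (ihx u hu)
    rwa [add_assoc] at this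
  | smul a x _ ih =>
    intro u hu
    rcases zmod_cases a with rfl | rfl
    · simpa using hu
    · simpa using ih u hu

/-- A subspace contained in the union of two subspaces. -/
theorem le_or_le_of_union {A B : Submodule (ZMod 2) V}
    (h : ∀ s ∈ A ⊔ B, s ∈ A ∨ s ∈ B) : A ≤ B ∨ B ≤ A := by
  by_contra hcon
  push Not at hcon
  obtain ⟨p, hpA, hpB⟩ := SetLike.not_le_iff_exists.1 hcon.1
  obtain ⟨q, hqB, hqA⟩ := SetLike.not_le_iff_exists.1 hcon.2
  rcases h (p + q) (Submodule.add_mem_sup hpA hqB) with h1 | h1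
  · exact hqA (mem2 h1 hpA (by have := c2 p; grind))
  · exact hpB (mem2 h1 hqB (by have := c2 q; grind))

/-- If a space is the union of three proper subspaces, the first has index two. -/
theorem index_two_of_union {S A B C : Submodule (ZMod 2) V}
    (hA : A ≤ S) (hB : B ≤ S) (hC : C ≤ S) (hB' : ¬ S ≤ B) (hC' : ¬ S ≤ C)
    (h : ∀ s ∈ S, s ∈ A ∨ s ∈ B ∨ s ∈ C) :
    ∀ s ∈ S, ∀ t ∈ S, s ∉ A → t ∉ A → s + t ∈ A := by
  -- pick `a ∈ A` outside `B ∪ C`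
  obtain ⟨a, haS, haB, haC⟩ : ∃ a ∈ S, a ∉ B ∧ a ∉ C := by
    obtain ⟨p, hpS, hpB⟩ := SetLike.not_le_iff_exists.1 hB'
    obtain ⟨q, hqS, hqC⟩ := SetLike.not_le_iff_exists.1 hC'
    by_cases hpC : p ∈ C
    · by_cases hqB : q ∈ B
      · refine ⟨p + q, S.add_mem hpS hqS, fun h1 => hpB (mem2 h1 hqB ?_),
          fun h1 => hqC (mem2 h1 hpC ?_)⟩
        · have := c2 q; grind
        · have := c2 p; grind
      · exact ⟨q, hqS, hqB, hqC⟩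
    · exact ⟨p, hpS, hpB, hpC⟩
  have haA : a ∈ A := by
    rcases h a haS with h1 | h1 | h1
    · exact h1
    · exact absurd h1 haB
    · exact absurd h1 haC
  have step : ∀ s ∈ S, s ∉ A → (s ∈ B ∧ s + a ∈ C ∧ s ∉ C) ∨ (s ∈ C ∧ s + a ∈ B ∧ s ∉ B) := by
    intro s hs hsA
    have hsaA : s + a ∉ A := fun h1 => hsA (mem2 h1 haA (by have := c2 a; grind))
    have e1 : ∀ D : Submodule (ZMod 2) V, s ∈ D → s + a ∈ D → a ∈ D := fun D h1 h2 =>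
      mem2 h1 h2 (by have := c2 s; grind)
    have h1 := h s hs
    have h2 := h (s + a) (S.add_mem hs haS)
    have e2 := e1 B
    have e3 := e1 C
    tauto
  have main : ∀ s ∈ S, ∀ t ∈ S, s ∉ A → t ∉ A → s ∈ B → t ∈ B → s + t ∈ A := by
    intro s hs t ht hsA htA hsB htB
    by_contra hst
    have h1 := step s hs hsA
    have h2 := step t ht htA
    have h3 := step (s + t) (S.add_mem hs ht) hst
    have hB1 := B.add_mem hsB htB
    have hC1 : s + a ∈ C → t + a ∈ C → s + t ∈ C := fun h1 h2 =>
      mem2 h1 h2 (by have := c2 a; grind)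
    tauto
  intro s hs t ht hsA htA
  have hadd : ∀ s, s ∉ A → s + a ∉ A := fun s hsA h1 =>
    hsA (mem2 h1 haA (by have := c2 a; grind))
  rcases step s hs hsA with h1 | h1 <;> rcases step t ht htA with h2 | h2
  · exact main s hs t ht hsA htA h1.1 h2.1
  · exact mem2 (main s hs (t + a) (S.add_mem ht haS) hsA (hadd t htA) h1.1 h2.2.1) haA
      (by have := c2 a; grind)
  · exact mem2 (main (s + a) (S.add_mem hs haS) t ht (hadd s hsA) htA h1.2.1 h2.1) haA
      (by have := c2 a; grind)
  · exact mem2 (main (s + a) (S.add_mem hs haS) (t + a) (S.add_mem ht haS) (hadd s hsA)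
      (hadd t htA) h1.2.1 h2.2.1) A.zero_mem (by have := c2 a; grind)

theorem finrank_of_index_two [Finite V] {S A : Submodule (ZMod 2) V} (hA : A ≤ S) (hS : ¬ S ≤ A)
    (h : ∀ s ∈ S, ∀ t ∈ S, s ∉ A → t ∉ A → s + t ∈ A) :
    Module.finrank (ZMod 2) S = Module.finrank (ZMod 2) A + 1 := by
  obtain ⟨p, hpS, hpA⟩ := SetLike.not_le_iff_exists.1 hS
  have h1 : S = A ⊔ Submodule.span (ZMod 2) {p} := by
    apply le_antisymm
    · intro s hs
      by_cases hsA : s ∈ A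
      · exact Submodule.mem_sup_left hsA
      · exact mem2 (Submodule.mem_sup_left (h s hs p hpS hsA hpA))
          (Submodule.mem_sup_right (Submodule.mem_span_singleton_self p))
          (by have := c2 p; grind)
    · exact sup_le hA (by simpa using hpS)
  have h2 : A ⊓ Submodule.span (ZMod 2) {p} = ⊥ := by
    rw [eq_bot_iff]
    rintro x ⟨hxA, hxp⟩
    obtain ⟨a, rfl⟩ := Submodule.mem_span_singleton.1 hxp
    rcases zmod_cases a with rfl | rfl
    · simp
    · exact absurd (by simpa using hxA) hpA
  have hp0 : p ≠ 0 := fun h => hpA (h ▸ A.zero_mem)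
  have h3 := Submodule.finrank_sup_add_finrank_inf_eq A (Submodule.span (ZMod 2) {p})
  rw [h2, ← h1, finrank_span_singleton hp0] at h3
  simpa using h3

end basics
end Claw

namespace Claw

section setup
variable {V : Type*} [AddCommGroup V] [Module (ZMod 2) V]

/-- `E` contains no induced claw. -/
def ClawFree (E : Set V) : Prop :=
  ∀ a ∈ E, ∀ b ∈ E, ∀ c ∈ E, a ≠ b → a ≠ c → b ≠ c →
    a + b ∈ E ∨ a + c ∈ E ∨ b + c ∈ E ∨ a + b + c ∈ E

/-- A claw-free set together with a maximal subspace avoiding it. -/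
structure Setup (E : Set V) (W : Submodule (ZMod 2) V) : Prop where
  zero : (0 : V) ∉ E
  claw : ClawFree E
  emp : ∀ w ∈ W, w ∉ E
  hit : ∀ v, v ∉ W → ∃ e ∈ E, v + e ∈ W

/-- The stabiliser in `W` of the trace of `E` on the coset of `e`. -/
def U (E : Set V) (W : Submodule (ZMod 2) V) (e : V) : Submodule (ZMod 2) V :=
  mkSub {w | w ∈ W ∧ ∀ w' ∈ W, e + w' ∈ E → e + w' + w ∈ E}
    ⟨W.zero_mem, fun w' _ h => by simpa using h⟩
    (fun x hx y hy => ⟨W.add_mem hx.1 hy.1, fun w' hw' h => by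
      have h1 := hx.2 w' hw' h
      have h2 := hy.2 (w' + x) (W.add_mem hw' hx.1) (by rwa [← add_assoc])
      rwa [show e + w' + (x + y) = e + (w' + x) + y by abel]⟩)

variable {E : Set V} {W : Submodule (ZMod 2) V}

theorem U_le (e : V) : U E W e ≤ W := fun _ h => h.1

theorem U_coset_le {e e' : V} (h : e + e' ∈ W) : U E W e ≤ U E W e' := by
  intro w hw
  refine ⟨hw.1, fun w' hw' h' => ?_⟩
  have := hw.2 (e + e' + w') (W.add_mem h hw') (by
    rwa [show e + (e + e' + w') = e' + w' by have := c2 e; grind])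
  rwa [show e + (e + e' + w') + w = e' + w' + w by have := c2 e; grind] at this

theorem U_coset {e e' : V} (h : e + e' ∈ W) : U E W e = U E W e' :=
  le_antisymm (U_coset_le h) (U_coset_le (by rwa [add_comm]))

theorem mem_U (S : Setup E W) {e w : V} (he : e ∈ E) : w ∈ U E W e ↔ w ∈ W ∧ e + w ∈ E := by
  constructor
  · intro h
    have := h.2 0 W.zero_mem (by simpa using he)
    exact ⟨h.1, by simpa using this⟩
  · rintro ⟨hw, hew⟩
    refine ⟨hw, fun w' hw' h => ?_⟩
    by_cases h1 : w = 0
    · simpa [h1] using h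
    by_cases h2 : w' = 0
    · simpa [h2] using hew
    by_cases h3 : w = w'
    · subst h3
      rwa [add_assoc, c2, add_zero]
    rcases S.claw e he (e + w) hew (e + w') h (by simpa using h1) (by simpa using h2)
      (by simpa using h3) with h4 | h4 | h4 | h4
    · exact absurd h4 (S.emp _ (mem2 hw W.zero_mem (by have := c2 e; grind)))
    · exact absurd h4 (S.emp _ (mem2 hw' W.zero_mem (by have := c2 e; grind)))
    · exact absurd h4 (S.emp _ (mem2 hw hw' (by have := c2 e; grind)))
    · rwa [show e + w' + w = e + (e + w) + (e + w') by have := c2 e; grind]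

theorem add_U (S : Setup E W) {e w : V} (he : e ∈ E) (h : w ∈ U E W e) : e + w ∈ E :=
  ((mem_U S he).1 h).2

theorem tri (S : Setup E W) {a b c : V} (ha : a ∈ E) (hb : b ∈ E) (hc : c ∈ E)
    (h : a + b + c ∈ W) :
    a + b + c ∈ U E W a ∨ a + b + c ∈ U E W b ∨ a + b + c ∈ U E W c := by
  have hab : a ≠ b := by
    rintro rfl; rw [c2, zero_add] at h; exact S.emp _ h hc
  have hac : a ≠ c := by
    rintro rfl
    exact S.emp _ h (by rwa [show a + b + a = b by have := c2 a; grind])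
  have hbc : b ≠ c := by
    rintro rfl
    exact S.emp _ h (by rwa [show a + b + b = a by have := c2 b; grind])
  rcases S.claw a ha b hb c hc hab hac hbc with h4 | h4 | h4 | h4
  · right; right
    rw [mem_U S hc]
    exact ⟨h, by rwa [show c + (a + b + c) = a + b by have := c2 c; grind]⟩
  · right; left
    rw [mem_U S hb]
    exact ⟨h, by rwa [show b + (a + b + c) = a + c by have := c2 b; grind]⟩
  · left
    rw [mem_U S ha]
    exact ⟨h, by rwa [show a + (a + b + c) = b + c by have := c2 a; grind]⟩
  · exact absurd h4 (S.emp _ h)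

/-- Sum of the three stabilisers. -/
theorem tri_mem (S : Setup E W) {a b c : V} (ha : a ∈ E) (hb : b ∈ E) (hc : c ∈ E)
    (h : a + b + c ∈ W) : a + b + c ∈ U E W a ⊔ U E W b ⊔ U E W c := by
  rcases tri S ha hb hc h with h | h | h
  · exact Submodule.mem_sup_left (Submodule.mem_sup_left h)
  · exact Submodule.mem_sup_left (Submodule.mem_sup_right h)
  · exact Submodule.mem_sup_right h

theorem tri_union (S : Setup E W) {a b c : V} (ha : a ∈ E) (hb : b ∈ E) (hc : c ∈ E)
    (h : a + b + c ∈ W) {s : V} (hs : s ∈ U E W a ⊔ U E W b ⊔ U E W c) :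
    s ∈ U E W a ∨ s ∈ U E W b ∨ s ∈ U E W c := by
  have h1 := tri_mem S ha hb hc h
  have h2 : s + (a + b + c) ∈ U E W a ⊔ U E W b ⊔ U E W c := Submodule.add_mem _ hs h1
  obtain ⟨y, hy, w, hw, hyw⟩ := Submodule.mem_sup.1 h2
  obtain ⟨u, hu, v, hv, rfl⟩ := Submodule.mem_sup.1 hy
  have hu' := U_le _ hu
  have hv' := U_le _ hv
  have hw' := U_le _ hw
  have e1 : (a + u) + (b + v) + (c + w) = s := by
    have := c2 (a + b + c)
    grind
  have h3 := tri S (add_U S ha hu) (add_U S hb hv) (add_U S hc hw) (by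
    rw [e1]
    have := (sup_le (sup_le (U_le (E := E) (W := W) a) (U_le b)) (U_le c)) hs
    exact this)
  rw [e1] at h3
  rwa [U_coset (e := a + u) (e' := a) (by rwa [show a + u + a = u by have := c2 a; grind]),
    U_coset (e := b + v) (e' := b) (by rwa [show b + v + b = v by have := c2 b; grind]),
    U_coset (e := c + w) (e' := c) (by rwa [show c + w + c = w by have := c2 c; grind])] at h3

theorem not_mem_of_mem (S : Setup E W) {e : V} (he : e ∈ E) : e ∉ W := fun h => S.emp _ h he

theorem pair_hit (S : Setup E W) {a b : V} (h : a + b ∉ W) : ∃ c ∈ E, a + b + c ∈ W := S.hit _ h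

/-- If one stabiliser of a line strictly contains the two others. -/
theorem max_case_aux (S : Setup E W) {a b c : V} (ha : a ∈ E) (hb : b ∈ E) (hc : c ∈ E)
    (h : a + b + c ∈ W) (hac : U E W a ≤ U E W c) (hbc : U E W b ≤ U E W c)
    (hac' : ¬ U E W c ≤ U E W a) (hbc' : ¬ U E W c ≤ U E W b) :
    U E W b ≤ U E W a ∧ ∀ s ∈ U E W c, ∀ t ∈ U E W c, s ∉ U E W b → t ∉ U E W b →
      s + t ∈ U E W b := by
  have h1 : a + b + c ∈ U E W c := by
    rcases tri S ha hb hc h with h | h | h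
    · exact hac h
    · exact hbc h
    · exact h
  have hab : a + b ∈ E := by
    have := add_U S hc h1
    rwa [show c + (a + b + c) = a + b by have := c2 c; grind] at this
  have hUab : U E W (a + b) = U E W c := U_coset h
  have key : ∀ t ∈ U E W c, ∀ w ∈ U E W c, w ∉ U E W a → t ∈ U E W b ∨ t + w ∈ U E W b := by
    intro t ht w hw hwa
    have htW := U_le _ ht
    have hwW := U_le _ hw
    have hw0 : w ≠ 0 := fun h => hwa (h ▸ Submodule.zero_mem _)
    have e1 : a + b + t ∈ E := add_U S hab (hUab ▸ ht)
    have e2 : a + b + t + w ∈ E := by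
      have := add_U S hab (hUab ▸ Submodule.add_mem _ ht hw)
      rwa [← add_assoc] at this
    have n1 : a ≠ a + b + t := by
      intro h2
      apply not_mem_of_mem S hb
      exact mem2 htW W.zero_mem (by have := c2 t; grind)
    have n2 : a ≠ a + b + t + w := by
      intro h2
      apply not_mem_of_mem S hb
      have h3 : a + (b + (t + w)) = a := by
        rw [← add_assoc, ← add_assoc]; exact h2.symm
      have h4 : b + (t + w) = 0 := by simpa using h3
      exact mem2 htW hwW (eq_of_add_eq_zero2 h4).symm
    have n3 : a + b + t ≠ a + b + t + w := by simpa using hw0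
    rcases S.claw a ha _ e1 _ e2 n1 n2 n3 with h4 | h4 | h4 | h4
    · left
      rw [mem_U S hb]
      exact ⟨htW, by rwa [show a + (a + b + t) = b + t by have := c2 a; grind] at h4⟩
    · right
      rw [mem_U S hb]
      exact ⟨W.add_mem htW hwW, by
        rwa [show a + (a + b + t + w) = b + (t + w) by have := c2 a; grind] at h4⟩
    · rw [show a + b + t + (a + b + t + w) = w by have := c2 (a + b + t); grind] at h4
      exact absurd h4 (S.emp _ hwW)
    · rw [show a + (a + b + t) + (a + b + t + w) = a + w by have := c2 (a + b + t); grind] at h4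
      exact absurd ((mem_U S ha).2 ⟨hwW, h4⟩) hwa
  obtain ⟨w0, hw0, hw0a⟩ := SetLike.not_le_iff_exists.1 hac'
  obtain ⟨t0, ht0, ht0b⟩ := SetLike.not_le_iff_exists.1 hbc'
  constructor
  · intro w hw
    by_contra hwa
    rcases key t0 ht0 w (hbc hw) hwa with h2 | h2
    · exact ht0b h2
    · exact ht0b (mem2 h2 hw (by have := c2 w; grind))
  · intro s hs t ht hsb htb
    have h2 := (key s hs w0 hw0 hw0a).resolve_left hsb
    have h3 := (key t ht w0 hw0 hw0a).resolve_left htb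
    exact mem2 h2 h3 (by have := c2 w0; grind)

theorem max_case [Finite V] (S : Setup E W) {a b c : V} (ha : a ∈ E) (hb : b ∈ E) (hc : c ∈ E)
    (h : a + b + c ∈ W) (hac : U E W a ≤ U E W c) (hbc : U E W b ≤ U E W c) :
    U E W a = U E W c ∨ U E W b = U E W c ∨ (U E W a = U E W b ∧
      Module.finrank (ZMod 2) (U E W c) = Module.finrank (ZMod 2) (U E W a) + 1) := by
  by_cases hac' : U E W c ≤ U E W a
  · exact Or.inl (le_antisymm hac hac')
  by_cases hbc' : U E W c ≤ U E W b
  · exact Or.inr (Or.inl (le_antisymm hbc hbc'))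
  right; right
  have h1 := max_case_aux S ha hb hc h hac hbc hac' hbc'
  have h2 := max_case_aux S hb ha hc (by rwa [add_comm b a]) hbc hac hbc' hac'
  exact ⟨le_antisymm h2.1 h1.1, finrank_of_index_two hac hac' h2.2⟩

/-- If no stabiliser of a line contains the two others, all are hyperplanes of their sum. -/
theorem nomax_case [Finite V] (S : Setup E W) {a b c : V} (ha : a ∈ E) (hb : b ∈ E) (hc : c ∈ E)
    (h : a + b + c ∈ W)
    (h1 : ¬ (U E W a ≤ U E W c ∧ U E W b ≤ U E W c))
    (h2 : ¬ (U E W a ≤ U E W b ∧ U E W c ≤ U E W b))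
    (h3 : ¬ (U E W b ≤ U E W a ∧ U E W c ≤ U E W a)) :
    ∀ e, e = a ∨ e = b ∨ e = c →
      Module.finrank (ZMod 2) (U E W a ⊔ U E W b ⊔ U E W c : Submodule (ZMod 2) V) =
        Module.finrank (ZMod 2) (U E W e) + 1 := by
  have hu := fun s hs => tri_union S ha hb hc h (s := s) hs
  have ia : U E W a ≤ U E W a ⊔ U E W b ⊔ U E W c := le_sup_left.trans le_sup_left
  have ib : U E W b ≤ U E W a ⊔ U E W b ⊔ U E W c := le_sup_right.trans le_sup_left
  have ic : U E W c ≤ U E W a ⊔ U E W b ⊔ U E W c := le_sup_right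
  have na : ¬ U E W a ⊔ U E W b ⊔ U E W c ≤ U E W a := fun h => h3 ⟨ib.trans h, ic.trans h⟩
  have nb : ¬ U E W a ⊔ U E W b ⊔ U E W c ≤ U E W b := fun h => h2 ⟨ia.trans h, ic.trans h⟩
  have nc : ¬ U E W a ⊔ U E W b ⊔ U E W c ≤ U E W c := fun h => h1 ⟨ia.trans h, ib.trans h⟩
  rintro e (rfl | rfl | rfl)
  · exact finrank_of_index_two ia na (index_two_of_union ia ib ic nb nc hu)
  · exact finrank_of_index_two ib nb (index_two_of_union ib ia ic na nc
      (fun s hs => by have := hu s hs; tauto))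
  · exact finrank_of_index_two ic nc (index_two_of_union ic ia ib na nb
      (fun s hs => by have := hu s hs; tauto))

/-- Lines with two stabilisers of different dimension. -/
theorem line_lt [Finite V] (S : Setup E W) {a b c : V} (ha : a ∈ E) (hb : b ∈ E) (hc : c ∈ E)
    (h : a + b + c ∈ W)
    (hlt : Module.finrank (ZMod 2) (U E W a) < Module.finrank (ZMod 2) (U E W b)) :
    U E W a ≤ U E W b ∧ (U E W b = U E W c ∨ (U E W c = U E W a ∧
      Module.finrank (ZMod 2) (U E W b) = Module.finrank (ZMod 2) (U E W a) + 1)) := by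
  have nba : ¬ U E W b ≤ U E W a := fun h => by
    have := Submodule.finrank_mono h
    omega
  by_cases h1 : U E W a ≤ U E W c ∧ U E W b ≤ U E W c
  · rcases max_case S ha hb hc h h1.1 h1.2 with h2 | h2 | h2
    · exact absurd (h2 ▸ h1.2) nba
    · exact ⟨h2 ▸ h1.1, Or.inl h2⟩
    · exact absurd h2.1.ge nba
  by_cases h2 : U E W a ≤ U E W b ∧ U E W c ≤ U E W b
  · refine ⟨h2.1, ?_⟩
    rcases max_case S ha hc hb (by rwa [add_right_comm]) h2.1 h2.2 with h3 | h3 | h3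
    · exact absurd h3.ge nba
    · exact Or.inl h3.symm
    · exact Or.inr ⟨h3.1.symm, h3.2⟩
  have h4 := nomax_case S ha hb hc h h1 h2 (fun h => nba h.1)
  have h5 := h4 a (by simp)
  have h6 := h4 b (by simp)
  omega

/-- Lines with two equal stabilisers. -/
theorem line_eq [Finite V] (S : Setup E W) {x z y : V} (hx : x ∈ E) (hz : z ∈ E) (hy : y ∈ E)
    (h : x + z + y ∈ W) (he : U E W x = U E W y) :
    U E W z ≤ U E W x ∨
      Module.finrank (ZMod 2) (U E W z) = Module.finrank (ZMod 2) (U E W x) + 1 := by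
  have hu := fun s hs => tri_union S hx hz hy h (s := s) hs
  rw [← he] at hu
  rcases le_or_le_of_union (A := U E W x) (B := U E W z) (fun s hs => by
    have := hu s (Submodule.mem_sup_left hs)
    tauto) with h1 | h1
  · rcases max_case S hx hy hz (by rwa [add_right_comm]) h1 (he ▸ h1) with h2 | h2 | h2
    · exact Or.inl h2.ge
    · exact Or.inl (he ▸ h2.ge)
    · exact Or.inr h2.2
  · exact Or.inl h1

end setup
end Claw

namespace Claw

section three
variable {V : Type*} [AddCommGroup V] [Module (ZMod 2) V]
variable {E : Set V} {W : Submodule (ZMod 2) V}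

local notation "dim" => Module.finrank (ZMod 2)

/-- `V0` is a subspace such that `E` outside of `V0` is a union of cosets of `V0`. -/
def Lift (E : Set V) (V0 : Submodule (ZMod 2) V) : Prop :=
  ∀ x ∈ E, x ∉ V0 → ∀ v ∈ V0, x + v ∈ E

/-- Elements of `E` of minimal stabiliser dimension. -/
def Emin (E : Set V) (W : Submodule (ZMod 2) V) (i : ℕ) : Set V :=
  {e | e ∈ E ∧ dim (U E W e) = i}

theorem line_add [Finite V] (S : Setup E W) {x y : V} (hx : x ∈ E) (hy : y ∈ E)
    (hlt : dim (U E W y) < dim (U E W x))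
    (hc : ∀ c ∈ E, x + y + c ∈ W → U E W x = U E W c) :
    x + y ∈ E ∧ U E W (x + y) = U E W x := by
  have hxy : x + y ∉ W := fun h => by
    have := U_coset (E := E) h
    rw [this] at hlt
    omega
  obtain ⟨c, hcE, hcW⟩ := pair_hit S hxy
  have h1 := hc c hcE hcW
  have h2 := line_lt S hy hx hcE (by rwa [add_comm y x]) hlt
  have h3 : x + y + c ∈ U E W c := by
    rcases tri S hx hy hcE hcW with h | h | h
    · exact h1 ▸ h
    · exact h1 ▸ h2.1 h
    · exact h
  have h4 := add_U S hcE h3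
  rw [show c + (x + y + c) = x + y by have := c2 c; grind] at h4
  exact ⟨h4, (U_coset hcW).trans h1.symm⟩

theorem span_case [Finite V] (S : Setup E W) (i : ℕ) (hi : ∀ e ∈ E, i ≤ dim (U E W e))
    (e0 : V) (he0 : e0 ∈ E) (hd0 : dim (U E W e0) = i)
    (NL : ∀ V0 : Submodule (ZMod 2) V, Lift E V0 → V0 = ⊥ ∨ V0 = ⊤) :
    Submodule.span (ZMod 2) E = ⊤ ∧ ∀ e ∈ E, dim (U E W e) ≤ i + 1 := by
  set P := Submodule.span (ZMod 2) (Emin E W i) with hP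
  set Z := W ⊔ P with hZ
  have hE'Z : ∀ y ∈ Emin E W i, y ∈ Z := fun y hy =>
    Submodule.mem_sup_right (Submodule.subset_span hy)
  have cl1 : ∀ x ∈ E, x ∉ Z → ∀ y ∈ Emin E W i,
      x + y ∈ E ∧ U E W (x + y) = U E W x ∧ x + y ∉ Z := by
    intro x hx hxZ y hy
    have hxm : i < dim (U E W x) :=
      lt_of_le_of_ne (hi x hx) (fun h => hxZ (hE'Z x ⟨hx, h.symm⟩))
    have hxy : x + y ∉ Z := fun h => hxZ (mem2 h (hE'Z y hy) (by have := c2 y; grind))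
    have hlt : dim (U E W y) < dim (U E W x) := by rw [hy.2]; exact hxm
    have h := line_add S hx hy.1 hlt (fun c hc hcW => by
      have hcZ : c ∉ Z := fun h => hxy (mem2 (Submodule.mem_sup_left hcW) h
        (by have := c2 c; grind))
      rcases (line_lt S hy.1 hx hc (by rwa [add_comm y x]) hlt).2 with h1 | h1
      · exact h1
      · exact absurd (hE'Z c ⟨hc, by rw [h1.1]; exact hy.2⟩) hcZ)
    exact ⟨h.1, h.2, hxy⟩
  have cl1' : ∀ x ∈ E, x ∉ Z → ∀ v ∈ P, x + v ∈ E ∧ U E W (x + v) = U E W x := by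
    intro x hx hxZ v hv
    have := span_ind (p := fun u => u ∈ E ∧ u ∉ Z ∧ U E W u = U E W x) (fun y hy u hu => by
      have h := cl1 u hu.1 hu.2.1 y hy
      exact ⟨h.1, h.2.2, h.2.1.trans hu.2.2⟩) hv x ⟨hx, hxZ, rfl⟩
    exact ⟨this.1, this.2.2⟩
  have cl2 : ∀ e ∈ E, e ∈ Z → dim (U E W e) ≤ i + 1 := by
    intro e he heZ
    by_contra hcon
    push Not at hcon
    obtain ⟨w, hw, v, hv, hwv⟩ := Submodule.mem_sup.1 heZ
    have := span_ind (p := fun u => u ∈ E ∧ i + 1 < dim (U E W u)) (fun y hy u hu => by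
      have hlt : dim (U E W y) < dim (U E W u) := by rw [hy.2]; omega
      have h := line_add S hu.1 hy.1 hlt (fun c hc hcW => by
        rcases (line_lt S hy.1 hu.1 hc (by rwa [add_comm y u]) hlt).2 with h1 | h1
        · exact h1
        · have := h1.2
          rw [hy.2] at this
          omega)
      exact ⟨h.1, by rw [h.2]; exact hu.2⟩) hv e ⟨he, hcon⟩
    refine S.emp _ hw ?_
    have h2 := this.1
    rwa [← hwv, add_assoc, c2, add_zero] at h2
  have cl3 : ∀ x ∈ E, x ∉ Z → ∀ e ∈ E, e ∈ Z → x + e ∈ E := by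
    intro x hx hxZ e he heZ
    obtain ⟨w, hw, v, hv, hwv⟩ := Submodule.mem_sup.1 heZ
    have h1 := cl1' x hx hxZ v hv
    have hsum : x + e + (x + v) = w := by
      have := c2 x; have := c2 v; grind
    have hmem : x + e + (x + v) ∈ W := hsum ▸ hw
    have hxm : i < dim (U E W x) :=
      lt_of_le_of_ne (hi x hx) (fun h => hxZ (hE'Z x ⟨hx, h.symm⟩))
    have h2 : U E W e ≤ U E W x := by
      rcases line_eq S hx he h1.1 hmem h1.2.symm with h2 | h2
      · exact h2
      · have := cl2 e he heZ
        omega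
    have h3 : w ∈ U E W (x + v) := by
      rw [h1.2]
      rcases tri S hx he h1.1 hmem with h | h | h <;> rw [hsum] at h
      · exact h
      · exact h2 h
      · exact h1.2 ▸ h
    have h4 := add_U S h1.1 h3
    rwa [show x + v + w = x + e by grind] at h4
  have hlift : Lift E (Submodule.span (ZMod 2) (E ∩ Z)) := by
    intro x hx hxV v hv
    have hxZ : x ∉ Z := fun h => hxV (Submodule.subset_span ⟨hx, h⟩)
    exact (span_ind (p := fun u => u ∈ E ∧ u ∉ Z) (fun e he u hu =>
      ⟨cl3 u hu.1 hu.2 e he.1 he.2, fun h => hu.2 (mem2 h he.2 (by have := c2 e; grind))⟩)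
      hv x ⟨hx, hxZ⟩).1
  have h0 : e0 ∈ E ∩ Z := ⟨he0, hE'Z e0 ⟨he0, hd0⟩⟩
  rcases NL _ hlift with h | h
  · have h1 : e0 ∈ Submodule.span (ZMod 2) (E ∩ (Z : Set V)) := Submodule.subset_span h0
    rw [h, Submodule.mem_bot] at h1
    exact absurd (h1 ▸ he0) S.zero
  · have hZtop : Z = ⊤ := by
      rw [eq_top_iff, ← h]
      exact Submodule.span_le.2 Set.inter_subset_right
    refine ⟨?_, fun e he => cl2 e he (hZtop ▸ Submodule.mem_top)⟩
    rw [eq_top_iff, ← h]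
    exact Submodule.span_mono Set.inter_subset_left

theorem sup_case (S : Setup E W) (hspan : Submodule.span (ZMod 2) E = ⊤)
    (K : Submodule (ZMod 2) V) (hK : ∀ e ∈ E, U E W e ≤ K) : W ≤ K := by
  suffices h : ∀ w ∈ W, w ∈ K ⊓ W from fun w hw => (h w hw).1
  have hK' : ∀ e ∈ E, U E W e ≤ K ⊓ W := fun e he => le_inf (hK e he) (U_le e)
  intro w hw
  have hwE : w ∈ Submodule.span (ZMod 2) E := hspan ▸ Submodule.mem_top
  have := span_ind (p := fun u => u ∈ K ⊓ W ∨ ∃ e ∈ E, u + e ∈ K ⊓ W) (fun x hx v hv => by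
    rcases hv with hv | ⟨e, he, hv⟩
    · right
      exact ⟨x, hx, by rwa [show v + x + x = v by have := c2 x; grind]⟩
    · by_cases hxe : x + e ∈ W
      · left
        have h1 : x + e ∈ U E W x := (mem_U S hx).2
          ⟨hxe, by rwa [show x + (x + e) = e by have := c2 x; grind]⟩
        exact mem2 hv (hK' x hx h1) (by have := c2 e; grind)
      · obtain ⟨c, hc, hcW⟩ := pair_hit S hxe
        right
        refine ⟨c, hc, ?_⟩
        have h1 : x + e + c ∈ K ⊓ W :=
          (sup_le (sup_le (hK' x hx) (hK' e he)) (hK' c hc)) (tri_mem S hx he hc hcW)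
        exact mem2 hv h1 (by have := c2 e; grind)) hwE 0 (Or.inl (Submodule.zero_mem _))
  rw [zero_add] at this
  rcases this with h | ⟨e, he, h⟩
  · exact h
  · exact absurd he (S.emp _ (mem2 h.2 hw (by have := c2 w; grind)))

theorem inf_case (S : Setup E W) (hne : E.Nonempty)
    (NL : ∀ V0 : Submodule (ZMod 2) V, Lift E V0 → V0 = ⊥ ∨ V0 = ⊤)
    (w : V) (hw : ∀ e ∈ E, w ∈ U E W e) : w = 0 := by
  by_contra hw0
  obtain ⟨e, he⟩ := hne
  have hl : Lift E (Submodule.span (ZMod 2) {w}) := by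
    intro x hx _ v hv
    exact span_ind (p := fun u => u ∈ E) (fun y hy u hu => by
      rw [Set.mem_singleton_iff.1 hy]
      exact add_U S hu (hw u hu)) hv x hx
  rcases NL _ hl with h | h
  · rw [Submodule.span_singleton_eq_bot] at h
    exact hw0 h
  · have h1 : e ∈ Submodule.span (ZMod 2) {w} := h ▸ Submodule.mem_top
    have h2 : Submodule.span (ZMod 2) {w} ≤ W := by
      simpa using (hw e he).1
    exact S.emp _ (h2 h1) he

theorem exists_ne_zero_of_finrank {A : Submodule (ZMod 2) V} (h : 0 < dim A) :
    ∃ w ∈ A, w ≠ 0 := by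
  by_contra hcon
  push Not at hcon
  have : A = ⊥ := (Submodule.eq_bot_iff A).2 hcon
  rw [this] at h
  simp at h

theorem five [Finite V] (S : Setup E W) (i : ℕ) (hi : ∀ e ∈ E, i ≤ dim (U E W e))
    (e0 : V) (he0 : e0 ∈ E) (hd0 : dim (U E W e0) = i)
    (hi' : ∀ e ∈ E, dim (U E W e) ≤ i + 1)
    (hL : ∀ K : Submodule (ZMod 2) V, (∀ e ∈ E, U E W e ≤ K) → W ≤ K)
    (hI : ∀ w, (∀ e ∈ E, w ∈ U E W e) → w = 0) :
    (∀ e ∈ E, dim (U E W e) ≤ 1) ∨ (∀ e ∈ E, dim W ≤ dim (U E W e) + 1) := by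
  rcases Nat.eq_zero_or_pos i with h0 | hpos
  · left; intro e he; have := hi' e he; omega
  by_cases hup : ∃ f ∈ E, dim (U E W f) = i + 1
  · right
    have hlow : ∀ e ∈ E, dim (U E W e) = i → ∀ f ∈ E, dim (U E W f) = i + 1 →
        U E W e ≤ U E W f := by
      intro e he hde f hf hdf
      have hef : e + f ∉ W := fun h => by
        have := U_coset (E := E) h
        rw [this] at hde; omega
      obtain ⟨c, hc, hcW⟩ := pair_hit S hef
      exact (line_lt S he hf hc hcW (by omega)).1
    obtain ⟨e2, he2, hd2, hne⟩ : ∃ e2 ∈ E, dim (U E W e2) = i ∧ ¬ U E W e0 ≤ U E W e2 := by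
      by_contra hcon
      push Not at hcon
      obtain ⟨w, hw, hw0⟩ := exists_ne_zero_of_finrank (A := U E W e0) (by omega)
      refine hw0 (hI w fun e he => ?_)
      by_cases hde : dim (U E W e) = i
      · exact hcon e he hde hw
      · have h1 := hi e he
        have h2 := hi' e he
        exact hlow e0 he0 hd0 e he (by omega) hw
    have hlt : i < dim (U E W e0 ⊔ U E W e2 : Submodule (ZMod 2) V) := by
      rw [← hd2]
      exact Submodule.finrank_lt_finrank_of_lt (lt_of_le_not_ge le_sup_right
        (fun h => hne (le_sup_left.trans h)))
    have hupper : ∀ f ∈ E, dim (U E W f) = i + 1 → U E W e0 ⊔ U E W e2 = U E W f := by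
      intro f hf hdf
      exact Submodule.eq_of_le_of_finrank_le (sup_le (hlow e0 he0 hd0 f hf hdf)
        (hlow e2 he2 hd2 f hf hdf)) (by omega)
    obtain ⟨f, hf, hdf⟩ := hup
    have hW : W ≤ U E W f := hL _ (fun e he => by
      by_cases hde : dim (U E W e) = i
      · exact hlow e he hde f hf hdf
      · have h1 := hi e he
        have h2 := hi' e he
        rw [← hupper f hf hdf, ← hupper e he (by omega)])
    have h1 := Submodule.finrank_mono hW
    intro e he
    have := hi e he
    omega
  · have hdim : ∀ e ∈ E, dim (U E W e) = i := by
      intro e he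
      have h1 := hi e he
      have h2 := hi' e he
      have h3 : dim (U E W e) ≠ i + 1 := fun h => hup ⟨e, he, h⟩
      omega
    have heq : ∀ e ∈ E, ∀ f ∈ E, U E W e ≤ U E W f → U E W e = U E W f := fun e he f hf h =>
      Submodule.eq_of_le_of_finrank_le h (by rw [hdim e he, hdim f hf])
    have hpair : ∀ e ∈ E, ∀ f ∈ E, U E W e ≠ U E W f →
        dim (U E W e ⊔ U E W f : Submodule (ZMod 2) V) = i + 1 ∧
        dim (U E W e ⊓ U E W f : Submodule (ZMod 2) V) + 1 = i := by
      intro e he f hf hne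
      have hef : e + f ∉ W := fun h => hne (U_coset h)
      obtain ⟨c, hc, hcW⟩ := pair_hit S hef
      have h1 := nomax_case S he hf hc hcW
        (fun h => hne ((heq e he c hc h.1).trans (heq f hf c hc h.2).symm))
        (fun h => hne (heq e he f hf h.1)) (fun h => hne (heq f hf e he h.1).symm) e (by simp)
      rw [hdim e he] at h1
      have h2 : dim (U E W e ⊔ U E W f : Submodule (ZMod 2) V) ≤ i + 1 := by
        rw [← h1]; exact Submodule.finrank_mono le_sup_left
      have h3 : i < dim (U E W e ⊔ U E W f : Submodule (ZMod 2) V) := by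
        rw [← hdim f hf]
        exact Submodule.finrank_lt_finrank_of_lt (lt_of_le_not_ge le_sup_right
          (fun h => hne (heq e he f hf (le_sup_left.trans h))))
      have h4 := Submodule.finrank_sup_add_finrank_inf_eq (U E W e) (U E W f)
      rw [hdim e he, hdim f hf] at h4
      omega
    obtain ⟨e2, he2, hne⟩ : ∃ e2 ∈ E, U E W e0 ≠ U E W e2 := by
      by_contra hcon
      push Not at hcon
      obtain ⟨w, hw, hw0⟩ := exists_ne_zero_of_finrank (A := U E W e0) (by omega)
      exact hw0 (hI w fun e he => hcon e he ▸ hw)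
    obtain ⟨hp1, hp2⟩ := hpair e0 he0 e2 he2 hne
    set L := U E W e0 ⊔ U E W e2 with hLdef
    set K := U E W e0 ⊓ U E W e2 with hKdef
    by_cases hall : ∀ e ∈ E, U E W e ≤ L
    · right
      have h1 := Submodule.finrank_mono (hL L hall)
      intro e he
      have := hi e he
      omega
    · left
      -- a stabiliser outside of `L` meets `L` in `K`
      have hout : ∀ e ∈ E, ¬ U E W e ≤ L → U E W e ⊓ L = K := by
        intro e he heL
        have h1 : dim (U E W e ⊓ L : Submodule (ZMod 2) V) < i := by
          rw [← hdim e he]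
          exact Submodule.finrank_lt_finrank_of_lt (lt_of_le_not_ge inf_le_left
            (fun h => heL (h.trans inf_le_right)))
        have h2 : ∀ f ∈ E, U E W f ≤ L → U E W e ⊓ U E W f = U E W e ⊓ L := by
          intro f hf hfL
          have h3 := (hpair e he f hf (fun h => heL (h ▸ hfL))).2
          exact Submodule.eq_of_le_of_finrank_le (inf_le_inf_left _ hfL) (by omega)
        have h3 := h2 e0 he0 le_sup_left
        have h4 := h2 e2 he2 le_sup_right
        refine Submodule.eq_of_le_of_finrank_le ?_ ?_
        · refine le_inf (h3 ▸ inf_le_right) (h4 ▸ inf_le_right)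
        · have := (hpair e he e0 he0 (fun h => heL (h ▸ le_sup_left))).2
          rw [← h3]; omega
      push Not at hall
      obtain ⟨e3, he3, he3L⟩ := hall
      have hKall : ∀ e ∈ E, K ≤ U E W e := by
        intro e he
        by_cases heL : U E W e ≤ L
        · have h1 := hout e3 he3 he3L
          have h2 := (hpair e3 he3 e he (fun h => he3L (h ▸ heL))).2
          have h3 : U E W e3 ⊓ U E W e = K := Submodule.eq_of_le_of_finrank_le
            (h1 ▸ inf_le_inf_left _ heL) (by omega)
          rw [← h3]; exact inf_le_right
        · rw [← hout e he heL]; exact inf_le_left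
      have hK0 : dim K = 0 := by
        by_contra h
        obtain ⟨w, hw, hw0⟩ := exists_ne_zero_of_finrank (A := K) (by omega)
        exact hw0 (hI w fun e he => hKall e he hw)
      intro e he
      rw [hdim e he]
      omega

end three
end Claw

namespace Claw

section four
variable {V : Type*} [AddCommGroup V] [Module (ZMod 2) V]
variable {E : Set V} {W : Submodule (ZMod 2) V}

local notation "dim" => Module.finrank (ZMod 2)

theorem lemG [Finite V] (S : Setup E W) {G : Type*} [AddCommGroup G] [Module (ZMod 2) G]
    [Finite G] (g : V → G)
    (hcos : ∀ e ∈ E, ∀ e' ∈ E, e + e' ∈ W → g e = g e')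
    (star : ∀ a ∈ E, ∀ b ∈ E, ∀ c ∈ E, a + b + c ∈ W → g a ≠ g b → g a ≠ 0 → g b ≠ 0 →
      g c = g a + g b)
    (two : ∃ t1 ∈ E, ∃ t2 ∈ E, g t1 ≠ 0 ∧ g t2 ≠ 0 ∧ g t1 ≠ g t2) :
    ∃ W' : Submodule (ZMod 2) V, W ≤ W' ∧ (∀ e ∈ E, e ∈ W' → g e = 0) ∧
      dim V ≤ dim W' + dim G := by
  obtain ⟨W', ⟨hWW', hW'0⟩, hmax⟩ := Set.Finite.exists_maximal
    (s := {W' : Submodule (ZMod 2) V | W ≤ W' ∧ ∀ e ∈ E, e ∈ W' → g e = 0}) (Set.toFinite _)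
    ⟨W, le_rfl, fun e he h => absurd he (S.emp _ h)⟩
  refine ⟨W', hWW', hW'0, ?_⟩
  have hex : ∀ v, v ∉ W' → ∃ e ∈ E, v + e ∈ W' ∧ g e ≠ 0 := by
    intro v hv
    by_contra hcon
    push Not at hcon
    have h1 : W' ⊔ Submodule.span (ZMod 2) {v} ≤ W' := by
      refine hmax ⟨hWW'.trans le_sup_left, fun e he heW => ?_⟩ le_sup_left
      obtain ⟨w, hw, z, hz, hwz⟩ := Submodule.mem_sup.1 heW
      obtain ⟨a, rfl⟩ := Submodule.mem_span_singleton.1 hz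
      rcases zmod_cases a with rfl | rfl
      · refine hW'0 e he ?_
        rw [← hwz]; simpa using hw
      · refine hcon e he ?_
        rw [← hwz, one_smul, show v + (w + v) = w by have := c2 v; grind]
        exact hw
    exact hv (h1 (Submodule.mem_sup_right (Submodule.mem_span_singleton_self v)))
  have huniq : ∀ e ∈ E, ∀ e' ∈ E, e + e' ∈ W' → g e ≠ 0 → g e' ≠ 0 → g e = g e' := by
    intro e he e' he' hW h1 h2
    by_contra hne
    have h3 : e + e' ∉ W := fun h => hne (hcos e he e' he' h)
    obtain ⟨c, hc, hcW⟩ := pair_hit S h3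
    have h4 := star e he e' he' c hc hcW hne h1 h2
    rw [hW'0 c hc (mem2 hW (hWW' hcW) (by have := c2 (e + e'); grind))] at h4
    exact hne (eq_of_add_eq_zero2 h4.symm)
  have star' : ∀ a ∈ E, ∀ b ∈ E, ∀ c ∈ E, a + b + c ∈ W' → g a ≠ g b → g a ≠ 0 → g b ≠ 0 →
      g c ≠ 0 → g c = g a + g b := by
    intro a ha b hb c hc habc hab h1 h2 h3
    have h4 : a + b ∉ W := fun h => hab (hcos a ha b hb h)
    obtain ⟨c', hc', hcW⟩ := pair_hit S h4
    have h5 := star a ha b hb c' hc' hcW hab h1 h2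
    rw [← h5]
    refine huniq c hc c' hc' (mem2 habc (hWW' hcW) (by have := c2 (a + b); grind)) h3 ?_
    rw [h5]
    exact fun h => hab (eq_of_add_eq_zero2 h)
  have hinj : ∀ e ∈ E, ∀ e' ∈ E, g e ≠ 0 → g e = g e' → e + e' ∈ W' := by
    intro e he e' he' h0 hee
    by_contra hcon
    obtain ⟨d, hd, hdW, hd0⟩ := hex _ hcon
    have hdf : g d = g e := by
      by_contra hne
      have h1 := star' e he d hd e' he' (by rwa [add_right_comm]) (Ne.symm hne) h0 hd0 (hee ▸ h0)
      rw [← hee] at h1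
      exact hd0 (by simpa using h1)
    obtain ⟨t, ht, ht0, hte⟩ : ∃ t ∈ E, g t ≠ 0 ∧ g t ≠ g e := by
      obtain ⟨t1, ht1, t2, ht2, h1, h2, h12⟩ := two
      by_cases h : g t1 = g e
      · exact ⟨t2, ht2, h2, fun h' => h12 (h.trans h'.symm)⟩
      · exact ⟨t1, ht1, h1, h⟩
    have nadd : g e + g t ≠ 0 := fun h => hte (eq_of_add_eq_zero2 h).symm
    obtain ⟨c1, hc1, hc1W, hc10⟩ := hex (e + t) (fun h => hte (huniq e he t ht h h0 ht0).symm)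
    have v1 := star' e he t ht c1 hc1 hc1W (Ne.symm hte) h0 ht0 hc10
    have n1 : g e' ≠ g c1 := by
      rw [v1, ← hee]
      simpa using ht0
    obtain ⟨c2', hc2, hc2W, hc20⟩ := hex (e' + c1)
      (fun h => n1 (huniq e' he' c1 hc1 h (hee ▸ h0) hc10))
    have v2 := star' e' he' c1 hc1 c2' hc2 hc2W n1 (hee ▸ h0) hc10 hc20
    obtain ⟨c3, hc3, hc3W, hc30⟩ := hex (d + t)
      (fun h => hte (hdf ▸ (huniq d hd t ht h hd0 ht0).symm))
    have v3 := star' d hd t ht c3 hc3 hc3W (hdf ▸ Ne.symm hte) hd0 ht0 hc30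
    have h23 : c2' + c3 ∈ W' := by
      have h1 := W'.add_mem hc1W hc2W
      have h2 := W'.add_mem hc3W hdW
      exact mem2 h1 h2 (by
        have := c2 c1; have := c2 e; have := c2 e'; have := c2 t; have := c2 d; grind)
    have h4 := huniq c2' hc2 c3 hc3 h23 hc20 hc30
    rw [v2, v3, v1, hdf, ← hee, ← add_assoc, c2, zero_add] at h4
    exact h0 (by simpa using h4.symm)
  choose! k hk using hex
  classical
  let h : V ⧸ W' → G := fun q => if q.out ∈ W' then 0 else g (k q.out)
  have hh : Function.Injective h := by
    intro q q' hqq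
    have hsub : q.out + q'.out ∈ W' → q = q' := by
      intro hm
      have e1 : W'.mkQ q.out = q := Quotient.out_eq q
      have e2 : W'.mkQ q'.out = q' := Quotient.out_eq q'
      rw [← e1, ← e2]
      have h3 : W'.mkQ (q.out + q'.out) = 0 :=
        (Submodule.Quotient.mk_eq_zero W').2 hm
      rw [map_add] at h3
      exact eq_of_add_eq_zero2 h3
    apply hsub
    simp only [h] at hqq
    by_cases h1 : q.out ∈ W' <;> by_cases h2 : q'.out ∈ W'
    · exact W'.add_mem h1 h2
    · rw [if_pos h1, if_neg h2] at hqq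
      exact absurd hqq.symm (hk _ h2).2.2
    · rw [if_neg h1, if_pos h2] at hqq
      exact absurd hqq (hk _ h1).2.2
    · rw [if_neg h1, if_neg h2] at hqq
      have h3 := hinj _ (hk _ h1).1 _ (hk _ h2).1 (hk _ h1).2.2 hqq
      exact mem2 (W'.add_mem (hk _ h1).2.1 (hk _ h2).2.1) h3
        (by have := c2 (k q.out); have := c2 (k q'.out); grind)
  have hcard := Nat.card_le_card_of_injective h hh
  rw [Module.natCard_eq_pow_finrank (K := ZMod 2) (V := V ⧸ W'),
    Module.natCard_eq_pow_finrank (K := ZMod 2) (V := G)] at hcard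
  have hle : dim (V ⧸ W') ≤ dim G := by
    rw [Nat.card_zmod] at hcard
    exact (Nat.pow_le_pow_iff_right (by norm_num)).1 hcard
  have := Submodule.finrank_quotient_add_finrank W'
  omega

theorem case_a [Finite V] (S : Setup E W) (hW2 : 2 ≤ dim W)
    (ha : ∀ e ∈ E, dim (U E W e) ≤ 1)
    (hL : ∀ K : Submodule (ZMod 2) V, (∀ e ∈ E, U E W e ≤ K) → W ≤ K) :
    ∃ Y : Submodule (ZMod 2) V, (∀ y ∈ Y, y ≠ 0 → y ∈ E) ∧ dim V ≤ 2 * dim W + dim Y := by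
  have hex : ∀ e, ∃ w : W, e ∈ E → (w : V) ∈ U E W e ∧ ∀ u ∈ U E W e, u = 0 ∨ u = w := by
    intro e
    by_cases he : e ∈ E
    · obtain ⟨v, hv⟩ := finrank_le_one_iff.1 (ha e he)
      refine ⟨⟨v, U_le _ v.2⟩, fun _ => ⟨v.2, fun u hu => ?_⟩⟩
      obtain ⟨c, hc⟩ := hv ⟨u, hu⟩
      have hc' : c • (v : V) = u := congrArg Subtype.val hc
      rcases zmod_cases c with rfl | rfl
      · left; rw [← hc', zero_smul]
      · right; rw [← hc', one_smul]
    · exact ⟨0, fun h => absurd h he⟩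
  choose g hg using hex
  have hg1 : ∀ e ∈ E, (g e : V) ∈ U E W e := fun e he => (hg e he).1
  have hg2 : ∀ e ∈ E, ∀ u : W, (u : V) ∈ U E W e → u = 0 ∨ u = g e := fun e he u hu => by
    rcases (hg e he).2 u hu with h | h
    · left; exact Subtype.ext h
    · right; exact Subtype.ext h
  obtain ⟨W', hWW', hW'0, hdim⟩ := lemG S g
    (fun e he e' he' h => by
      have hU := U_coset (E := E) h
      have h1 := hg2 e' he' (g e) (hU ▸ hg1 e he)
      have h2 := hg2 e he (g e') (hU ▸ hg1 e' he')
      rcases h1 with h1 | h1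
      · rcases h2 with h2 | h2
        · rw [h1, h2]
        · exact h2.symm
      · exact h1)
    (fun a ha' b hb c hc h hab h1 h2 => by
      have hs : ((g a + g b : W) : V) ∈ U E W a ⊔ U E W b ⊔ U E W c :=
        Submodule.mem_sup_left (Submodule.add_mem_sup (hg1 a ha') (hg1 b hb))
      have hs0 : g a + g b ≠ 0 := fun h => hab (eq_of_add_eq_zero2 h)
      rcases tri_union S ha' hb hc h hs with h3 | h3 | h3
      · rcases hg2 a ha' _ h3 with h4 | h4
        · exact absurd h4 hs0
        · exact absurd (by simpa using h4) h2
      · rcases hg2 b hb _ h3 with h4 | h4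
        · exact absurd h4 hs0
        · exact absurd (by simpa using h4) h1
      · rcases hg2 c hc _ h3 with h4 | h4
        · exact absurd h4 hs0
        · exact h4.symm)
    (by
      by_contra hcon
      push Not at hcon
      obtain ⟨t, ht⟩ : ∃ t : W, ∀ e ∈ E, g e = 0 ∨ g e = t := by
        by_cases h : ∃ t1 ∈ E, g t1 ≠ 0
        · obtain ⟨t1, ht1, h1⟩ := h
          refine ⟨g t1, fun e he => ?_⟩
          by_cases h2 : g e = 0
          · exact Or.inl h2
          · exact Or.inr (hcon t1 ht1 e he h1 h2).symm
        · push Not at h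
          exact ⟨0, fun e he => Or.inl (h e he)⟩
      have h1 := Submodule.finrank_mono (hL (Submodule.span (ZMod 2) {(t : V)}) (fun e he u hu => by
        rcases (hg e he).2 u hu with h | h
        · rw [h]; exact Submodule.zero_mem _
        · rcases ht e he with h2 | h2
          · rw [h, h2]; exact Submodule.zero_mem _
          · rw [h, h2]; exact Submodule.mem_span_singleton_self _))
      have h2 : dim (Submodule.span (ZMod 2) {(t : V)}) ≤ 1 := by
        simpa using finrank_span_le_card (R := ZMod 2) ({(t : V)} : Set V)
      omega)
  have hU0 : ∀ e ∈ E, e ∈ W' → ∀ u ∈ U E W e, u = 0 := by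
    intro e he heW u hu
    rcases (hg e he).2 u hu with h | h
    · exact h
    · rw [h, hW'0 e he heW]; rfl
  let Y : Submodule (ZMod 2) V := mkSub {v | v = 0 ∨ (v ∈ E ∧ v ∈ W')} (Or.inl rfl) (by
    rintro x (rfl | hx) y (rfl | hy)
    · left; simp
    · right; simpa using hy
    · right; simpa using hx
    · by_cases hxy : x + y ∈ W
      · left
        refine hU0 x hx.1 hx.2 _ ((mem_U S hx.1).2 ⟨hxy, ?_⟩)
        rw [show x + (x + y) = y by have := c2 x; grind]
        exact hy.1
      · right
        obtain ⟨c, hc, hcW⟩ := pair_hit S hxy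
        have hxyW' := W'.add_mem hx.2 hy.2
        have hcW' : c ∈ W' := mem2 hxyW' (hWW' hcW) (by have := c2 (x + y); grind)
        have h0 : x + y + c = 0 := by
          rcases tri S hx.1 hy.1 hc hcW with h | h | h
          · exact hU0 x hx.1 hx.2 _ h
          · exact hU0 y hy.1 hy.2 _ h
          · exact hU0 c hc hcW' _ h
        exact ⟨(eq_of_add_eq_zero2 h0).symm ▸ hc, hxyW'⟩)
  refine ⟨Y, fun y hy hy0 => ?_, ?_⟩
  · rcases hy with h | h
    · exact absurd h hy0
    · exact h.1
  · have h1 : W' ≤ Y ⊔ W := by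
      intro v hv
      by_cases hvW : v ∈ W
      · exact Submodule.mem_sup_right hvW
      · obtain ⟨e, he, heW⟩ := S.hit v hvW
        have heY : e ∈ Y := Or.inr ⟨he, mem2 hv (hWW' heW) (by have := c2 v; grind)⟩
        exact mem2 (Submodule.mem_sup_left heY) (Submodule.mem_sup_right heW)
          (by have := c2 e; grind)
    have h2 := Submodule.finrank_mono h1
    have h3 := Submodule.finrank_add_le_finrank_add_finrank Y W
    omega

theorem ne_zero_one {a : ZMod 2} (h : a ≠ 0) : a = 1 := (zmod_cases a).resolve_left h

theorem z2 {a b : ZMod 2} (h : a = 0 ↔ b = 0) : a = b := by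
  revert a b; decide

theorem dual_star {X : Type*} [AddCommGroup X] [Module (ZMod 2) X]
    (f g h : Module.Dual (ZMod 2) X) (hfg : f ≠ g) (hf : f ≠ 0) (hg : g ≠ 0) :
    (∃ p, f p = 0 ∧ g p = 1) ∧ ((∀ w, f w = 0 ∨ g w = 0 ∨ h w = 0) → h ≠ 0 → h = f + g) := by
  have key : ∀ f g : Module.Dual (ZMod 2) X, f ≠ g → f ≠ 0 → g ≠ 0 → ∃ p, f p = 0 ∧ g p = 1 := by
    intro f g hfg hf hg
    obtain ⟨w, hw⟩ : ∃ w, f w ≠ g w := by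
      by_contra hcon; push Not at hcon; exact hfg (LinearMap.ext hcon)
    by_cases hfw : f w = 0
    · exact ⟨w, hfw, ne_zero_one (fun h => hw (hfw.trans h.symm))⟩
    · have hgw : g w = 0 := by
        by_contra h
        exact hw ((ne_zero_one hfw).trans (ne_zero_one h).symm)
      obtain ⟨q, hq⟩ : ∃ q, g q ≠ 0 := by
        by_contra hcon; push Not at hcon; exact hg (LinearMap.ext hcon)
      by_cases hfq : f q = 0
      · exact ⟨q, hfq, ne_zero_one hq⟩
      · refine ⟨q + w, ?_, ?_⟩
        · rw [map_add, ne_zero_one hfq, ne_zero_one hfw]; rfl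
        · rw [map_add, ne_zero_one hq, hgw]; rfl
  refine ⟨key f g hfg hf hg, fun hu hh => ?_⟩
  obtain ⟨p, hp1, hp2⟩ := key f g hfg hf hg
  obtain ⟨q, hq1, hq2⟩ := key g f hfg.symm hg hf
  have hpq : h p + h q = 0 := by
    have := hu (p + q)
    simp only [map_add, hp1, hp2, hq1, hq2] at this
    simpa using this
  have h00 : ∀ w, f w = 0 → g w = 0 → h w = 0 := by
    intro w hw1 hw2
    have := hu (w + (p + q))
    simp only [map_add, hp1, hp2, hq1, hq2, hw1, hw2, hpq] at this
    simpa using this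
  have h01 : ∀ w, f w = 0 → g w = 1 → h w = h p := by
    intro w hw1 hw2
    have := h00 (w + p) (by rw [map_add, hw1, hp1]; rfl) (by rw [map_add, hw2, hp2]; rfl)
    rw [map_add] at this
    exact eq_of_add_eq_zero2 this
  have h10 : ∀ w, f w = 1 → g w = 0 → h w = h p := by
    intro w hw1 hw2
    have := h00 (w + q) (by rw [map_add, hw1, hq2]; rfl) (by rw [map_add, hw2, hq1]; rfl)
    rw [map_add] at this
    rw [eq_of_add_eq_zero2 this, eq_of_add_eq_zero2 hpq]
  have h11 : ∀ w, f w = 1 → g w = 1 → h w = 0 := by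
    intro w hw1 hw2
    have := hu w
    rw [hw1, hw2] at this
    simpa using this
  have hp : h p = 1 := by
    refine ne_zero_one fun hp0 => hh (LinearMap.ext fun w => ?_)
    rcases zmod_cases (f w) with h1 | h1 <;> rcases zmod_cases (g w) with h2 | h2
    · exact h00 w h1 h2
    · exact (h01 w h1 h2).trans hp0
    · exact (h10 w h1 h2).trans hp0
    · exact h11 w h1 h2
  ext w
  rw [LinearMap.add_apply]
  rcases zmod_cases (f w) with h1 | h1 <;> rcases zmod_cases (g w) with h2 | h2
  · rw [h00 w h1 h2, h1, h2]; rfl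
  · rw [h01 w h1 h2, h1, h2, hp]; rfl
  · rw [h10 w h1 h2, h1, h2, hp]; rfl
  · rw [h11 w h1 h2, h1, h2]; rfl

theorem case_b [Finite V] (S : Setup E W) (hW2 : 2 ≤ dim W)
    (hb : ∀ e ∈ E, dim W ≤ dim (U E W e) + 1)
    (hI : ∀ w, (∀ e ∈ E, w ∈ U E W e) → w = 0) :
    ∃ Y : Submodule (ZMod 2) V, (∀ y ∈ Y, y ≠ 0 → y ∈ E) ∧ dim V ≤ 2 * dim W + dim Y := by
  have hker : ∀ f : Module.Dual (ZMod 2) W, f ≠ 0 → dim (LinearMap.ker f) + 1 = dim W :=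
    fun f hf => Module.Dual.finrank_ker_add_one_of_ne_zero hf
  have hex : ∀ e, ∃ f : Module.Dual (ZMod 2) W, e ∈ E → ∀ w : W, f w = 0 ↔ (w : V) ∈ U E W e := by
    intro e
    by_cases he : e ∈ E
    · set H : Submodule (ZMod 2) W := (U E W e).comap W.subtype with hH
      have hdH : dim H = dim (U E W e) :=
        LinearEquiv.finrank_eq (Submodule.comapSubtypeEquivOfLe (U_le e))
      by_cases htop : H = ⊤
      · refine ⟨0, fun _ w => ⟨fun _ => ?_, fun _ => rfl⟩⟩
        have : w ∈ H := htop ▸ Submodule.mem_top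
        exact this
      · obtain ⟨f, hf0, hf⟩ := Submodule.exists_le_ker_of_lt_top H (lt_top_iff_ne_top.2 htop)
        have h1 : H = LinearMap.ker f := by
          apply Submodule.eq_of_le_of_finrank_le hf
          have h2 := hker f hf0
          have h3 := hb e he
          omega
        refine ⟨f, fun _ w => ?_⟩
        rw [← LinearMap.mem_ker, ← h1]
        rfl
    · exact ⟨0, fun h => absurd h he⟩
  choose g hg using hex
  have : Finite (Module.Dual (ZMod 2) W) := Module.finite_of_finite (ZMod 2)
  obtain ⟨W', hWW', hW'0, hdim⟩ := lemG S g
    (fun e he e' he' h => by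
      have hU := U_coset (E := E) h
      ext w
      apply z2
      rw [hg e he, hg e' he', hU])
    (fun a ha b hb' c hc h hab h1 h2 => by
      obtain ⟨⟨p, hp1, hp2⟩, hfin⟩ := dual_star (g a) (g b) (g c) hab h1 h2
      obtain ⟨⟨q, hq1, hq2⟩, -⟩ := dual_star (g b) (g a) (g c) hab.symm h2 h1
      have hall : ∀ w : W, (w : V) ∈ U E W a ⊔ U E W b := by
        intro w
        rcases zmod_cases (g b w) with h3 | h3
        · exact Submodule.mem_sup_right ((hg b hb' w).1 h3)
        · refine Submodule.mem_sup.2 ⟨p, (hg a ha p).1 hp1, ((w + p : W) : V),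
            (hg b hb' _).1 ?_, ?_⟩
          · rw [map_add, h3, hp2]; rfl
          · rw [Submodule.coe_add]; have := c2 (p : V); grind
      refine hfin (fun w => ?_) (fun hc0 => ?_)
      · rw [hg a ha, hg b hb', hg c hc]
        exact tri_union S ha hb' hc h (Submodule.mem_sup_left (hall w))
      · have hUc : ∀ w : W, (w : V) ∈ U E W c := fun w => (hg c hc w).1 (by rw [hc0]; rfl)
        have hle : ∀ x, U E W x ≤ U E W c := fun x u hu => hUc ⟨u, U_le _ hu⟩
        rcases max_case S ha hb' hc h (hle a) (hle b) with h3 | h3 | h3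
        · refine h1 (LinearMap.ext fun w => ?_)
          exact (hg a ha w).2 (h3 ▸ hUc w)
        · refine h2 (LinearMap.ext fun w => ?_)
          exact (hg b hb' w).2 (h3 ▸ hUc w)
        · refine hab (LinearMap.ext fun w => z2 ?_)
          rw [hg a ha, hg b hb', h3.1])
    (by
      by_contra hcon
      push Not at hcon
      obtain ⟨t, ht⟩ : ∃ t : Module.Dual (ZMod 2) W, ∀ e ∈ E, g e = 0 ∨ g e = t := by
        by_cases h : ∃ t1 ∈ E, g t1 ≠ 0
        · obtain ⟨t1, ht1, h1⟩ := h
          refine ⟨g t1, fun e he => ?_⟩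
          by_cases h2 : g e = 0
          · exact Or.inl h2
          · exact Or.inr (hcon t1 ht1 e he h1 h2).symm
        · push Not at h
          exact ⟨0, fun e he => Or.inl (h e he)⟩
      obtain ⟨w, hw, hw0⟩ : ∃ w : W, t w = 0 ∧ w ≠ 0 := by
        by_cases ht0 : t = 0
        · obtain ⟨w, hw, hw0⟩ := exists_ne_zero_of_finrank (A := W) (by omega)
          exact ⟨⟨w, hw⟩, by rw [ht0]; rfl, fun h => hw0 (congrArg Subtype.val h)⟩
        · have h1 := hker t ht0
          obtain ⟨w, hw, hw0⟩ := exists_ne_zero_of_finrank (A := LinearMap.ker t) (by omega)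
          exact ⟨w, hw, hw0⟩
      refine hw0 (Subtype.ext (hI w fun e he => (hg e he w).1 ?_))
      rcases ht e he with h | h
      · rw [h]; rfl
      · rw [h, hw])
  have hfull : ∀ v ∈ W', v ∉ W → v ∈ E := by
    intro v hv hvW
    obtain ⟨e, he, heW⟩ := S.hit v hvW
    have heW' : e ∈ W' := mem2 hv (hWW' heW) (by have := c2 v; grind)
    have h1 : v + e ∈ U E W e := (hg e he ⟨v + e, heW⟩).1 (by rw [hW'0 e he heW']; rfl)
    have h2 := add_U S he h1
    rwa [show e + (v + e) = v by have := c2 e; grind] at h2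
  obtain ⟨Q, hQ⟩ := Submodule.exists_isCompl W
  refine ⟨Q ⊓ W', fun y hy hy0 => hfull y hy.2 fun hyW => hy0 ?_, ?_⟩
  · exact Submodule.disjoint_def.1 hQ.disjoint y hyW hy.1
  · have h1 : W' ≤ W ⊔ (Q ⊓ W') := by
      intro v hv
      obtain ⟨w, hw, q, hq, hwq⟩ := Submodule.mem_sup.1
        (show v ∈ W ⊔ Q from hQ.sup_eq_top ▸ Submodule.mem_top)
      refine Submodule.mem_sup.2 ⟨w, hw, q, ⟨hq, ?_⟩, hwq⟩
      exact mem2 hv (hWW' hw) (by have := c2 w; grind)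
    have h2 := Submodule.finrank_mono h1
    have h3 := Submodule.finrank_add_le_finrank_add_finrank W (Q ⊓ W')
    have h4 : dim (Module.Dual (ZMod 2) W) = dim W := Subspace.dual_finrank_eq
    omega

theorem structure_thm [Finite V] (S : Setup E W) (hW2 : 2 ≤ dim W)
    (NL : ∀ V0 : Submodule (ZMod 2) V, Lift E V0 → V0 = ⊥ ∨ V0 = ⊤) :
    ∃ Y : Submodule (ZMod 2) V, (∀ y ∈ Y, y ≠ 0 → y ∈ E) ∧ dim V ≤ 2 * dim W + dim Y := by
  rcases E.eq_empty_or_nonempty with h | hne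
  · refine ⟨⊥, fun y hy hy0 => absurd hy hy0, ?_⟩
    have hW : W = ⊤ := by
      rw [eq_top_iff]
      intro v _
      by_contra hv
      obtain ⟨e, he, -⟩ := S.hit v hv
      rw [h] at he
      exact he
    rw [hW, finrank_top]
    omega
  · obtain ⟨e0, he0, hmin⟩ := Set.Finite.exists_minimalFor (fun e => dim (U E W e)) E
      (Set.toFinite _) hne
    have hi : ∀ e ∈ E, dim (U E W e0) ≤ dim (U E W e) := fun e he => by
      rcases le_total (dim (U E W e0)) (dim (U E W e)) with h | h
      · exact h
      · exact hmin he h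
    obtain ⟨h1, h2⟩ := span_case S _ hi e0 he0 rfl NL
    have hL := sup_case S h1
    have hI := inf_case S hne NL
    rcases five S _ hi e0 he0 rfl h2 hL hI with h | h
    · exact case_a S hW2 h hL
    · exact case_b S hW2 h hI

end four
end Claw

namespace Claw

section five
local notation "dim" => Module.finrank (ZMod 2)

/-- The conclusion for a pair `(V, E)`. -/
def Good (C : ℕ) (V : Type) [AddCommGroup V] [Module (ZMod 2) V] (E : Set V) : Prop :=
  ∃ W1 W2 : Submodule (ZMod 2) V, (∀ w ∈ W1, w ∉ E) ∧ (∀ w ∈ W2, w ≠ 0 → w ∈ E) ∧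
    dim V ≤ C * (dim W1 + dim W2) ^ 7

/-- The statement about sum-free sets hitting all subspaces of dimension `d`. -/
def SumFreeBound (K : ℕ) : Prop :=
  ∀ (V : Type) [AddCommGroup V] [Module (ZMod 2) V] [Finite V] (F : Set V), (0 : V) ∉ F →
    (∀ x ∈ F, ∀ y ∈ F, x + y ∉ F) → ∀ d : ℕ, 20 ≤ d →
    (∀ Y : Submodule (ZMod 2) V, dim Y = d → ∃ y ∈ Y, y ∈ F) → dim V ≤ K * d ^ 7

variable {V : Type} [AddCommGroup V] [Module (ZMod 2) V]

theorem join_dim [Finite V] {V0 V1 : Submodule (ZMod 2) V} (h : IsCompl V0 V1)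
    (A0 : Submodule (ZMod 2) V0) (A1 : Submodule (ZMod 2) V1) :
    dim (A0.map V0.subtype ⊔ A1.map V1.subtype : Submodule (ZMod 2) V) = dim A0 + dim A1 := by
  have h1 := Submodule.finrank_sup_add_finrank_inf_eq (A0.map V0.subtype) (A1.map V1.subtype)
  have h2 : A0.map V0.subtype ⊓ A1.map V1.subtype = ⊥ := by
    rw [eq_bot_iff, ← h.inf_eq_bot]
    exact inf_le_inf (Submodule.map_subtype_le _ _) (Submodule.map_subtype_le _ _)
  rw [h2, Submodule.finrank_map_subtype_eq, Submodule.finrank_map_subtype_eq] at h1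
  simpa using h1

theorem lift_join [Finite V] {E : Set V} {V0 V1 : Submodule (ZMod 2) V} (h : IsCompl V0 V1)
    (hl : Lift E V0) {C : ℕ} (g0 : Good C V0 (Subtype.val ⁻¹' E))
    (g1 : Good C V1 (Subtype.val ⁻¹' E)) : Good C V E := by
  obtain ⟨A0, B0, hA0, hB0, hd0⟩ := g0
  obtain ⟨A1, B1, hA1, hB1, hd1⟩ := g1
  have hd : dim V0 + dim V1 = dim V := Submodule.finrank_add_eq_of_isCompl h
  have hout : ∀ x ∈ V1, x ≠ 0 → ∀ y ∈ V0, y + x ∉ V0 := by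
    intro x hx hx0 y hy hyx
    exact hx0 (Submodule.disjoint_def.1 h.disjoint x
      (mem2 hyx hy (by have := c2 y; grind)) hx)
  refine ⟨A0.map V0.subtype ⊔ A1.map V1.subtype, B0.map V0.subtype ⊔ B1.map V1.subtype,
    ?_, ?_, ?_⟩
  · intro w hw hwE
    obtain ⟨y, hy, z, hz, rfl⟩ := Submodule.mem_sup.1 hw
    obtain ⟨a, ha, rfl⟩ := Submodule.mem_map.1 hy
    obtain ⟨b, hb, rfl⟩ := Submodule.mem_map.1 hz
    simp only [Submodule.subtype_apply] at hwE
    by_cases hb0 : (b : V) = 0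
    · rw [hb0, add_zero] at hwE
      exact hA0 a ha hwE
    · have h1 := hl _ hwE (hout b b.2 hb0 a a.2) a a.2
      rw [show (a : V) + b + a = b by have := c2 (a : V); grind] at h1
      exact hA1 b hb h1
  · intro w hw hw0
    obtain ⟨y, hy, z, hz, rfl⟩ := Submodule.mem_sup.1 hw
    obtain ⟨a, ha, rfl⟩ := Submodule.mem_map.1 hy
    obtain ⟨b, hb, rfl⟩ := Submodule.mem_map.1 hz
    simp only [Submodule.subtype_apply] at hw0 ⊢
    by_cases hb0 : (b : V) = 0
    · rw [hb0, add_zero] at hw0 ⊢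
      exact hB0 a ha (fun h => hw0 (by rw [h]; rfl))
    · have h1 := hB1 b hb (fun h => hb0 (by rw [h]; rfl))
      have h2 := hl _ h1 (by simpa using hout b b.2 hb0 0 V0.zero_mem) a a.2
      rwa [add_comm] at h2
  · rw [join_dim h, join_dim h, ← hd]
    have h3 := pow_add_pow_le (Nat.zero_le (dim A0 + dim B0)) (Nat.zero_le (dim A1 + dim B1))
      (n := 7) (by norm_num)
    calc dim V0 + dim V1 ≤ C * (dim A0 + dim B0) ^ 7 + C * (dim A1 + dim B1) ^ 7 :=
          Nat.add_le_add hd0 hd1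
      _ = C * ((dim A0 + dim B0) ^ 7 + (dim A1 + dim B1) ^ 7) := by ring
      _ ≤ C * (dim A0 + dim A1 + (dim B0 + dim B1)) ^ 7 := by
          refine Nat.mul_le_mul_left _ (h3.trans (le_of_eq ?_))
          congr 1
          ring

theorem good_all {K : ℕ} (hK : SumFreeBound K) : ∀ (n : ℕ) (V : Type) [AddCommGroup V]
    [Module (ZMod 2) V] [Finite V] (E : Set V), (0 : V) ∉ E → ClawFree E → dim V = n →
    Good (K * 21 ^ 7 + 2) V E := by
  intro n
  induction n using Nat.strong_induction_on with
  | _ n ih =>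
  intro V _ _ _ E h0 hcl hn
  classical
  -- a maximal full subspace
  obtain ⟨Y, hY, hYmax⟩ := Set.Finite.exists_maximalFor (fun Y : Submodule (ZMod 2) V => dim Y)
    {Y | ∀ y ∈ Y, y ≠ 0 → y ∈ E} (Set.toFinite _) ⟨⊥, fun y hy hy0 => absurd hy hy0⟩
  obtain ⟨W, hW, hWmax⟩ := Set.Finite.exists_maximalFor (fun Y : Submodule (ZMod 2) V => dim Y)
    {Y | ∀ y ∈ Y, y ∉ E} (Set.toFinite _) ⟨⊥, fun y hy => by rw [(Submodule.mem_bot _).1 hy]; exact h0⟩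
  have hYmax' : ∀ Y' : Submodule (ZMod 2) V, (∀ y ∈ Y', y ≠ 0 → y ∈ E) → dim Y' ≤ dim Y :=
    fun Y' h => (le_total (dim Y') (dim Y)).elim id (fun h' => hYmax h h')
  have hWmax' : ∀ Y' : Submodule (ZMod 2) V, (∀ y ∈ Y', y ∉ E) → dim Y' ≤ dim W :=
    fun Y' h => (le_total (dim Y') (dim W)).elim id (fun h' => hWmax h h')
  by_cases hn0 : n = 0
  · exact ⟨⊥, ⊥, fun y hy => by rw [(Submodule.mem_bot _).1 hy]; exact h0,
      fun y hy hy0 => absurd hy hy0, by omega⟩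
  by_cases hW1 : dim W ≤ 1
  · refine ⟨W, Y, hW, hY, ?_⟩
    have hpos : 1 ≤ dim W + dim Y := by
      have : Nontrivial V := Module.nontrivial_of_finrank_pos (R := ZMod 2) (by omega)
      obtain ⟨v, hv⟩ := exists_ne (0 : V)
      have hd1 : dim (Submodule.span (ZMod 2) {v}) = 1 := finrank_span_singleton hv
      have hm : ∀ y ∈ Submodule.span (ZMod 2) {v}, y ≠ 0 → y = v := by
        intro y hy hy0
        obtain ⟨a, rfl⟩ := Submodule.mem_span_singleton.1 hy
        rcases zmod_cases a with rfl | rfl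
        · simp at hy0
        · simp
      by_cases hvE : v ∈ E
      · have := hYmax' _ (fun y hy hy0 => by rw [hm y hy hy0]; exact hvE)
        omega
      · have := hWmax' (Submodule.span (ZMod 2) {v}) (fun y hy => by
          by_cases hy0 : y = 0
          · rw [hy0]; exact h0
          · rw [hm y hy hy0]; exact hvE)
        omega
    have hb := hK V {v | v ≠ 0 ∧ v ∉ E} (fun h => h.1 rfl) (by
      rintro x ⟨hx0, hx⟩ y ⟨hy0, hy⟩ ⟨hxy0, hxy⟩
      have hxy' : x ≠ y := fun h => hxy0 (by rw [h, c2])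
      let P : Submodule (ZMod 2) V := mkSub {v | v = 0 ∨ v = x ∨ v = y ∨ v = x + y} (by simp) (by
        have e1 := c2 x
        have e2 := c2 y
        rintro a (rfl | rfl | rfl | rfl) b (rfl | rfl | rfl | rfl) <;>
          simp only [Set.mem_setOf_eq] <;> grind)
      have hP := hWmax' P (by
        rintro v (rfl | rfl | rfl | rfl)
        · exact h0
        · exact hx
        · exact hy
        · exact hxy)
      have hlt : Submodule.span (ZMod 2) {x} < P := by
        refine lt_of_le_of_ne ?_ ?_
        · rw [Submodule.span_singleton_le_iff_mem]
          exact Or.inr (Or.inl rfl)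
        · intro h
          have : y ∈ Submodule.span (ZMod 2) {x} := by
            rw [h]; exact Or.inr (Or.inr (Or.inl rfl))
          obtain ⟨a, rfl⟩ := Submodule.mem_span_singleton.1 this
          rcases zmod_cases a with rfl | rfl
          · simp at hy0
          · simp at hxy'
      have h2 := Submodule.finrank_lt_finrank_of_lt hlt
      have h3 : dim (Submodule.span (ZMod 2) {x}) = 1 := finrank_span_singleton hx0
      omega) (dim Y + 20) (by omega) (by
      intro Y' hY'
      by_contra hcon
      push Not at hcon
      have := hYmax' Y' (fun y hy hy0 => by
        by_contra hyE
        exact hcon y hy ⟨hy0, hyE⟩)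
      omega)
    calc dim V ≤ K * (dim Y + 20) ^ 7 := hb
      _ ≤ K * (21 * (dim W + dim Y)) ^ 7 := by gcongr; omega
      _ = K * 21 ^ 7 * (dim W + dim Y) ^ 7 := by ring
      _ ≤ (K * 21 ^ 7 + 2) * (dim W + dim Y) ^ 7 := by gcongr; omega
  push Not at hW1
  by_cases hNL : ∀ V0 : Submodule (ZMod 2) V, Lift E V0 → V0 = ⊥ ∨ V0 = ⊤
  · have S : Setup E W := ⟨h0, hcl, hW, fun v hv => by
      by_contra hcon
      push Not at hcon
      have h1 := hWmax' (W ⊔ Submodule.span (ZMod 2) {v}) (by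
        intro e heW he
        obtain ⟨w, hw, z, hz, hwz⟩ := Submodule.mem_sup.1 heW
        obtain ⟨a, rfl⟩ := Submodule.mem_span_singleton.1 hz
        rcases zmod_cases a with rfl | rfl
        · refine hW w hw ?_
          rw [zero_smul, add_zero] at hwz
          rwa [hwz]
        · refine hcon e he ?_
          rw [← hwz, one_smul, show v + (w + v) = w by have := c2 v; grind]
          exact hw)
      have h2 : W < W ⊔ Submodule.span (ZMod 2) {v} := lt_of_le_not_ge le_sup_left (fun h =>
        hv (h (Submodule.mem_sup_right (Submodule.mem_span_singleton_self v))))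
      have := Submodule.finrank_lt_finrank_of_lt h2
      omega⟩
    obtain ⟨Y', hY', hd⟩ := structure_thm S hW1 hNL
    refine ⟨W, Y', hW, hY', ?_⟩
    have h1 : dim W + dim Y' ≤ (dim W + dim Y') ^ 7 := Nat.le_self_pow (by norm_num) _
    calc dim V ≤ 2 * (dim W + dim Y') := by omega
      _ ≤ 2 * (dim W + dim Y') ^ 7 := by gcongr
      _ ≤ _ := by gcongr; omega
  · push Not at hNL
    obtain ⟨V0, hl, hbot, htop⟩ := hNL
    obtain ⟨V1, hc⟩ := Submodule.exists_isCompl V0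
    have hd : dim V0 + dim V1 = dim V := Submodule.finrank_add_eq_of_isCompl hc
    have hlt0 : dim V0 < n := hn ▸ Submodule.finrank_lt (lt_top_iff_ne_top.2 htop).ne
    have hlt1 : dim V1 < n := by
      have : dim V0 ≠ 0 := fun h => hbot (Submodule.finrank_eq_zero.1 h)
      omega
    have sub : ∀ V' : Submodule (ZMod 2) V, dim V' < n →
        Good (K * 21 ^ 7 + 2) V' (Subtype.val ⁻¹' E) := by
      intro V' hV'
      refine ih _ hV' V' _ (by simpa using h0) ?_ rfl
      intro a ha b hb c hc hab hac hbc
      exact hcl a ha b hb c hc (fun h => hab (Subtype.ext h)) (fun h => hac (Subtype.ext h))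
        (fun h => hbc (Subtype.ext h))
    exact lift_join hc hl (sub V0 hlt0) (sub V1 hlt1)

/-- From the structural result to the Ramsey statement for colourings. -/
theorem final_of_bound {K : ℕ} (hK : SumFreeBound K)
    (clw : (Fin 3 → ZMod 2) → Fin 2)
    (h1 : ∀ v, v ≠ 0 → (v = ![1,0,0] ∨ v = ![0,1,0] ∨ v = ![0,0,1]) → clw v = 0)
    (h2 : ∀ v, v ≠ 0 → ¬ (v = ![1,0,0] ∨ v = ![0,1,0] ∨ v = ![0,0,1]) → clw v = 1) :
    ∃ C : ℝ, 0 < C ∧ ∀ (n : ℕ) (c : (Fin n → ZMod 2) → Fin 2),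
      (¬ ∃ φ : (Fin 3 → ZMod 2) →ₗ[ZMod 2] (Fin n → ZMod 2),
        Function.Injective φ ∧ ∀ v : Fin 3 → ZMod 2, v ≠ 0 → c (φ v) = clw v) →
      ∃ W : Submodule (ZMod 2) (Fin n → ZMod 2),
        C * (n : ℝ) ^ ((1 : ℝ) / 7) ≤ (Module.finrank (ZMod 2) W : ℝ) ∧
        ∀ v ∈ W, v ≠ 0 → ∀ w ∈ W, w ≠ 0 → c v = c w := by
  set M : ℝ := ((K * 21 ^ 7 + 2 : ℕ) : ℝ) with hM
  have hM0 : 0 < M := by rw [hM]; positivity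
  refine ⟨(M ^ ((1 : ℝ) / 7) * 2)⁻¹, by positivity, fun n c hc => ?_⟩
  have hfin : ∀ z : Fin 2, z ≠ 0 → z = 1 := by decide
  have hgood := good_all hK n (Fin n → ZMod 2) {v | v ≠ 0 ∧ c v = 0} (fun h => h.1 rfl) (by
    rintro x ⟨hx0, hx⟩ y ⟨hy0, hy⟩ z ⟨hz0, hz⟩ hxy hxz hyz
    by_contra hcon
    simp only [Set.mem_setOf_eq, not_or, not_and] at hcon
    obtain ⟨hc1, hc2, hc3, hc4⟩ := hcon
    have n1 : x + y ≠ 0 := fun h => hxy (eq_of_add_eq_zero2 h)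
    have n2 : x + z ≠ 0 := fun h => hxz (eq_of_add_eq_zero2 h)
    have n3 : y + z ≠ 0 := fun h => hyz (eq_of_add_eq_zero2 h)
    have n4 : x + y + z ≠ 0 := fun h => by
      have h' := eq_of_add_eq_zero2 h
      exact hc1 n1 (h' ▸ hz)
    refine hc ⟨Fintype.linearCombination (ZMod 2) ![x, y, z], ?_, ?_⟩
    · rw [← LinearMap.ker_eq_bot, LinearMap.ker_eq_bot']
      intro v hv
      rw [Fintype.linearCombination_apply, Fin.sum_univ_three] at hv
      simp only [Matrix.cons_val] at hv
      rcases zmod_cases (v 0) with e0 | e0 <;> rcases zmod_cases (v 1) with e1 | e1 <;>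
        rcases zmod_cases (v 2) with e2 | e2 <;> rw [e0, e1, e2] at hv <;>
        simp only [zero_smul, one_smul, zero_add, add_zero] at hv <;> first
        | contradiction
        | (ext i; fin_cases i <;> assumption)
    · intro v hv
      have hval : Fintype.linearCombination (ZMod 2) ![x, y, z] v = v 0 • x + v 1 • y + v 2 • z := by
        rw [Fintype.linearCombination_apply, Fin.sum_univ_three]
        simp only [Matrix.cons_val]
      rw [hval]
      have hext : ∀ a b d, v 0 = a → v 1 = b → v 2 = d → v = ![a, b, d] := by
        intro a b d ha hb hd
        ext i; fin_cases i <;> simp [ha, hb, hd]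
      rcases zmod_cases (v 0) with e0 | e0 <;> rcases zmod_cases (v 1) with e1 | e1 <;>
        rcases zmod_cases (v 2) with e2 | e2 <;> have hv' := hext _ _ _ e0 e1 e2 <;>
        rw [e0, e1, e2] <;>
        simp only [zero_smul, one_smul, zero_add, add_zero]
      · exact absurd (by rw [hv']; ext i; fin_cases i <;> rfl) hv
      · rw [hz, h1 v hv (by rw [hv']; decide)]
      · rw [hy, h1 v hv (by rw [hv']; decide)]
      · rw [hfin _ (hc3 n3), h2 v hv (by rw [hv']; decide)]
      · rw [hx, h1 v hv (by rw [hv']; decide)]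
      · rw [hfin _ (hc2 n2), h2 v hv (by rw [hv']; decide)]
      · rw [hfin _ (hc1 n1), h2 v hv (by rw [hv']; decide)]
      · rw [hfin _ (hc4 n4), h2 v hv (by rw [hv']; decide)]) (by simp)
  obtain ⟨W1, W2, hW1, hW2, hd⟩ := hgood
  have key : ∀ W : Submodule (ZMod 2) (Fin n → ZMod 2), dim W1 + dim W2 ≤ 2 * dim W →
      (M ^ ((1 : ℝ) / 7) * 2)⁻¹ * (n : ℝ) ^ ((1 : ℝ) / 7) ≤ (dim W : ℝ) := by
    intro W hW
    have e1 : (n : ℝ) ≤ M * (2 * (dim W : ℝ)) ^ 7 := by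
      have : n ≤ (K * 21 ^ 7 + 2) * (2 * dim W) ^ 7 := by
        have h3 : dim (Fin n → ZMod 2) = n := by simp
        rw [h3] at hd
        exact hd.trans (by gcongr)
      rw [hM]
      exact_mod_cast this
    have e2 : (n : ℝ) ^ ((1 : ℝ) / 7) ≤ M ^ ((1 : ℝ) / 7) * (2 * (dim W : ℝ)) := by
      calc (n : ℝ) ^ ((1 : ℝ) / 7) ≤ (M * (2 * (dim W : ℝ)) ^ 7) ^ ((1 : ℝ) / 7) := by
            apply Real.rpow_le_rpow <;> first | positivity | exact e1
        _ = M ^ ((1 : ℝ) / 7) * (2 * (dim W : ℝ)) := by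
            rw [Real.mul_rpow hM0.le (by positivity)]
            congr 1
            rw [← Real.rpow_natCast, ← Real.rpow_mul (by positivity)]
            norm_num
    rw [inv_mul_le_iff₀ (by positivity)]
    calc _ ≤ _ := e2
      _ = _ := by ring
  rcases le_total (dim W1) (dim W2) with h | h
  · refine ⟨W2, key W2 (by omega), fun v hv hv0 w hw hw0 => ?_⟩
    rw [(hW2 v hv hv0).2, (hW2 w hw hw0).2]
  · refine ⟨W1, key W1 (by omega), fun v hv hv0 w hw hw0 => ?_⟩
    have e1 := hfin _ (fun h => hW1 v hv ⟨hv0, h⟩)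
    have e2 := hfin _ (fun h => hW1 w hw ⟨hw0, h⟩)
    rw [e1, e2]

end five
end Claw

set_option linter.unusedSectionVars false
namespace Claw

section moments
open Finset
variable {V : Type*} [AddCommGroup V] [Module (ZMod 2) V] [Fintype V] [DecidableEq V]

/-- The autocorrelation of a function. -/
def cv (u : V → ℝ) (z : V) : ℝ := ∑ t, u t * u (t + z)

theorem cv_shift (u : V → ℝ) (x y : V) : ∑ t, u (x + t) * u (y + t) = cv u (x + y) := by
  unfold cv
  rw [← Equiv.sum_comp (Equiv.addLeft x)]
  refine Finset.sum_congr rfl fun t _ => ?_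
  simp only [Equiv.coe_addLeft]
  congr 2
  · have := c2 x; grind
  · abel

theorem moment (u w : V → ℝ) (k : ℕ) :
    ∑ s : Fin k → V, ∑ x, ∑ y, w (x + y) * ((∏ i, u (x + s i)) * ∏ i, u (y + s i)) =
      Fintype.card V * ∑ z, w z * cv u z ^ k := by
  rw [Finset.sum_comm]
  have h1 : ∀ x : V, ∑ s : Fin k → V, ∑ y, w (x + y) * ((∏ i, u (x + s i)) * ∏ i, u (y + s i)) =
      ∑ z, w z * cv u z ^ k := by
    intro x
    rw [Finset.sum_comm, ← Equiv.sum_comp (Equiv.addLeft x) (fun z => w z * cv u z ^ k)]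
    refine Finset.sum_congr rfl fun y _ => ?_
    simp only [Equiv.coe_addLeft]
    rw [← Finset.mul_sum, ← cv_shift, Fintype.sum_pow]
    congr 1
    refine Finset.sum_congr rfl fun s _ => ?_
    rw [Finset.prod_mul_distrib]
  rw [Finset.sum_congr rfl (fun x _ => h1 x), Finset.sum_const, Finset.card_univ, nsmul_eq_mul]

theorem card_pos' : (0 : ℝ) < Fintype.card V := by
  exact_mod_cast Fintype.card_pos

theorem cv_moment_nonneg (u : V → ℝ) (k : ℕ) : 0 ≤ ∑ z, cv u z ^ k := by
  have h := moment u (fun _ => 1) k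
  simp only [one_mul] at h
  have h2 : 0 ≤ (Fintype.card V : ℝ) * ∑ z, cv u z ^ k := by
    rw [← h]
    refine Finset.sum_nonneg fun s _ => ?_
    have : ∑ x : V, ∑ y : V, (∏ i, u (x + s i)) * ∏ i, u (y + s i) =
        (∑ x : V, ∏ i, u (x + s i)) ^ 2 := by
      rw [sq, Finset.sum_mul_sum]
    rw [this]
    positivity
  exact nonneg_of_mul_nonneg_right h2 (card_pos' (V := V))

/-- Indicator function. -/
def ind (A : Finset V) (x : V) : ℝ := if x ∈ A then 1 else 0

theorem sum_ind (A : Finset V) : ∑ x, ind A x = A.card := by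
  simp [ind]

theorem ind_nonneg (A : Finset V) (x : V) : 0 ≤ ind A x := by
  unfold ind; split_ifs <;> norm_num

theorem cv_ind_nonneg (A : Finset V) (z : V) : 0 ≤ cv (ind A) z :=
  Finset.sum_nonneg fun _ _ => mul_nonneg (ind_nonneg _ _) (ind_nonneg _ _)

theorem sum_shift (u : V → ℝ) (z : V) : ∑ t, u (t + z) = ∑ t, u t :=
  Equiv.sum_comp (Equiv.addRight z) u

theorem cv_sub (u : V → ℝ) (c : ℝ) (z : V) : cv (fun x => u x - c) z =
    cv u z - 2 * c * ∑ t, u t + Fintype.card V * c ^ 2 := by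
  unfold cv
  have h1 : ∀ t, (u t - c) * (u (t + z) - c) =
      u t * u (t + z) - c * u (t + z) - c * u t + c ^ 2 := fun t => by ring
  simp_rw [h1]
  rw [Finset.sum_add_distrib, Finset.sum_sub_distrib, Finset.sum_sub_distrib, ← Finset.mul_sum,
    ← Finset.mul_sum, sum_shift, Finset.sum_const, Finset.card_univ, nsmul_eq_mul]
  ring

/-- Normalised autocorrelation. -/
noncomputable def Fn (A : Finset V) (z : V) : ℝ := Fintype.card V / (A.card : ℝ) ^ 2 * cv (ind A) z

theorem Fn_nonneg (A : Finset V) (z : V) : 0 ≤ Fn A z :=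
  mul_nonneg (by positivity) (cv_ind_nonneg A z)

theorem Fn_sub_one (A : Finset V) (hA : A.Nonempty) (z : V) : Fn A z - 1 =
    Fintype.card V / (A.card : ℝ) ^ 2 *
      cv (fun x => ind A x - A.card / Fintype.card V) z := by
  rw [cv_sub, sum_ind, Fn]
  have h1 : (A.card : ℝ) ≠ 0 := by exact_mod_cast hA.card_pos.ne'
  have h2 : (Fintype.card V : ℝ) ≠ 0 := (card_pos' (V := V)).ne'
  field_simp
  ring

theorem Fn_moment_nonneg (A : Finset V) (hA : A.Nonempty) (k : ℕ) :
    0 ≤ ∑ z, (Fn A z - 1) ^ k := by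
  simp_rw [Fn_sub_one A hA, mul_pow]
  rw [← Finset.mul_sum]
  exact mul_nonneg (by positivity) (cv_moment_nonneg _ _)

theorem Fn_moment (A B : Finset V) (hA : A.Nonempty) (d : ℕ) (hd : 1 ≤ d)
    (hB : ∀ z ∈ B, cv (ind A) z = 0) (hBc : (Fintype.card V : ℝ) ≤ 2 ^ d * B.card) :
    4 ^ d / 2 * (Fintype.card V : ℝ) ≤ ∑ z, Fn A z ^ (4 * d) := by
  have h1 : (B.card : ℝ) ≤ ∑ z, (Fn A z - 1) ^ (2 * d) := by
    calc (B.card : ℝ) = ∑ z ∈ B, (Fn A z - 1) ^ (2 * d) := by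
          rw [Finset.sum_congr rfl (g := fun _ => (1 : ℝ))]
          · simp
          · intro z hz
            rw [Fn, hB z hz, mul_zero, zero_sub, pow_mul]
            norm_num
      _ ≤ _ := Finset.sum_le_sum_of_subset_of_nonneg (Finset.subset_univ _)
          (fun z _ _ => by rw [pow_mul]; positivity)
  have h2 : ∑ z, Fn A z ^ (4 * d) = ∑ j ∈ Finset.range (4 * d + 1),
      ((4 * d).choose j : ℝ) * ∑ z, (Fn A z - 1) ^ j := by
    simp_rw [Finset.mul_sum]
    rw [Finset.sum_comm]
    refine Finset.sum_congr rfl fun z _ => ?_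
    conv_lhs => rw [show Fn A z = (Fn A z - 1) + 1 by ring, add_pow]
    refine Finset.sum_congr rfl fun j _ => ?_
    simp only [one_pow, mul_one]
    ring
  have h3 : ((4 * d).choose (2 * d) : ℝ) * ∑ z, (Fn A z - 1) ^ (2 * d) ≤
      ∑ z, Fn A z ^ (4 * d) := by
    rw [h2]
    exact Finset.single_le_sum (f := fun j => ((4 * d).choose j : ℝ) * ∑ z, (Fn A z - 1) ^ j)
      (fun j _ => mul_nonneg (by positivity) (Fn_moment_nonneg A hA j))
      (Finset.mem_range.2 (by omega))
  have h4 : (8 : ℝ) ^ d ≤ 2 * ((4 * d).choose (2 * d) : ℝ) := by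
    have e1 := Nat.four_pow_le_two_mul_self_mul_centralBinom (2 * d) (by omega)
    rw [Nat.centralBinom, show 2 * (2 * d) = 4 * d by ring] at e1
    have e2 : (2 : ℝ) ^ d * 8 ^ d ≤ 2 ^ d * (2 * ((4 * d).choose (2 * d) : ℝ)) := by
      calc (2 : ℝ) ^ d * 8 ^ d = 4 ^ (2 * d) := by
            rw [← mul_pow, pow_mul]; norm_num
        _ ≤ 4 * d * ((4 * d).choose (2 * d) : ℝ) := by exact_mod_cast e1
        _ ≤ 2 ^ d * (2 * ((4 * d).choose (2 * d) : ℝ)) := by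
            have e3 : 2 * d ≤ 2 ^ d := by
              clear * - hd
              induction d, hd using Nat.le_induction with
              | base => norm_num
              | succ n hn ih => rw [pow_succ]; omega
            have e4 : 2 * (d : ℝ) ≤ 2 ^ d := by exact_mod_cast e3
            have e5 : (0 : ℝ) ≤ ((4 * d).choose (2 * d) : ℝ) := by positivity
            nlinarith
    exact le_of_mul_le_mul_left e2 (by positivity)
  have h5 : (8 : ℝ) ^ d = 4 ^ d * 2 ^ d := by rw [← mul_pow]; norm_num
  have h6 : (0 : ℝ) < 4 ^ d := by positivity
  calc 4 ^ d / 2 * (Fintype.card V : ℝ) ≤ 4 ^ d / 2 * (2 ^ d * B.card) := by gcongr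
    _ = 8 ^ d / 2 * B.card := by rw [h5]; ring
    _ ≤ ((4 * d).choose (2 * d) : ℝ) * B.card := by gcongr; linarith
    _ ≤ ((4 * d).choose (2 * d) : ℝ) * ∑ z, (Fn A z - 1) ^ (2 * d) := by gcongr
    _ ≤ _ := h3

/-- Intersection of translates. -/
def As (A : Finset V) {k : ℕ} (s : Fin k → V) : Finset V :=
  Finset.univ.filter fun x => ∀ i, x + s i ∈ A

theorem prod_ind (A : Finset V) {k : ℕ} (s : Fin k → V) (x : V) :
    ∏ i, ind A (x + s i) = ind (As A s) x := by
  by_cases h : ∀ i, x + s i ∈ A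
  · rw [ind, if_pos (by simpa [As] using h)]
    exact Finset.prod_eq_one fun i _ => by rw [ind, if_pos (h i)]
  · rw [ind, if_neg (by simpa [As] using h)]
    push Not at h
    obtain ⟨i, hi⟩ := h
    exact Finset.prod_eq_zero (Finset.mem_univ i) (by rw [ind, if_neg hi])

theorem sum_As (A : Finset V) (k : ℕ) :
    ∑ s : Fin k → V, ((As A s).card : ℝ) = Fintype.card V * (A.card : ℝ) ^ k := by
  simp_rw [← sum_ind, ← prod_ind]
  rw [Finset.sum_comm]
  have : ∀ x : V, ∑ s : Fin k → V, ∏ i, ind A (x + s i) = (A.card : ℝ) ^ k := by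
    intro x
    rw [← Fintype.sum_pow (fun t => ind A (x + t)) k]
    congr 1
    rw [← sum_ind, ← Equiv.sum_comp (Equiv.addLeft x) (ind A)]
    rfl
  rw [Finset.sum_congr rfl (fun x _ => this x), Finset.sum_const, Finset.card_univ, nsmul_eq_mul]
  simp [sum_ind]

/-- Pairs of `A'` with sum of weight `w`. -/
def pairs (A : Finset V) (w : V → ℝ) : ℝ := ∑ x ∈ A, ∑ y ∈ A, w (x + y)

theorem sum_mul_ind (A : Finset V) (f : V → ℝ) : ∑ x, f x * ind A x = ∑ x ∈ A, f x := by
  simp [ind]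

theorem sum_pairs (A : Finset V) (w : V → ℝ) (k : ℕ) :
    ∑ s : Fin k → V, pairs (As A s) w = Fintype.card V * ∑ z, w z * cv (ind A) z ^ k := by
  rw [← moment]
  refine Finset.sum_congr rfl fun s _ => ?_
  unfold pairs
  rw [← sum_mul_ind]
  refine Finset.sum_congr rfl fun x _ => ?_
  rw [← sum_mul_ind, Finset.sum_mul]
  refine Finset.sum_congr rfl fun y _ => ?_
  rw [prod_ind, prod_ind]
  ring

theorem pairs_one (A : Finset V) : pairs A (fun _ => 1) = (A.card : ℝ) ^ 2 := by
  simp [pairs, sq]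

theorem sift (A B : Finset V) (hA : A.Nonempty) (d : ℕ) (hd : 20 ≤ d)
    (hB : ∀ z ∈ B, cv (ind A) z = 0) (hBc : (Fintype.card V : ℝ) ≤ 2 ^ d * B.card) :
    ∃ A' : Finset V, 1 / 2 * Fintype.card V * ((A.card : ℝ) / Fintype.card V) ^ (4 * d) ≤ A'.card ∧
      40 * pairs A' (fun z => if 5 / 4 ≤ Fn A z then 0 else 1) ≤ (A'.card : ℝ) ^ 2 := by
  by_contra hcon
  push Not at hcon
  set M : ℝ := (Fintype.card V : ℝ) with hM
  set a : ℝ := (A.card : ℝ) with ha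
  have hM0 : 0 < M := card_pos'
  have ha0 : 0 < a := by rw [ha]; exact_mod_cast hA.card_pos
  set τ := 1 / 2 * M * (a / M) ^ (4 * d) with hτ
  have hτ0 : 0 < τ := by positivity
  set w : V → ℝ := fun z => if 5 / 4 ≤ Fn A z then 0 else 1 with hw
  have hw0 : ∀ z, 0 ≤ w z := fun z => by simp only [hw]; split_ifs <;> norm_num
  have key : ∀ A' : Finset V, pairs A' (fun _ => 1) ≤ τ * A'.card + 40 * pairs A' w := by
    intro A'
    rw [pairs_one]
    have hp : 0 ≤ pairs A' w := Finset.sum_nonneg fun x _ => Finset.sum_nonneg fun y _ => hw0 _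
    have hc : (0 : ℝ) ≤ A'.card := by positivity
    by_cases h : τ ≤ A'.card
    · have := hcon A' h
      nlinarith
    · push Not at h
      nlinarith
  have h1 := Finset.sum_le_sum (fun (s : Fin (4 * d) → V) (_ : s ∈ Finset.univ) => key (As A s))
  rw [Finset.sum_add_distrib, ← Finset.mul_sum, ← Finset.mul_sum, sum_As, sum_pairs, sum_pairs] at h1
  simp only [one_mul] at h1
  rw [← hM, ← ha] at h1
  have hcv : ∀ z, cv (ind A) z = a ^ 2 / M * Fn A z := by
    intro z
    rw [Fn, ← hM, ← ha]
    field_simp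
  set P := (a ^ 2 / M) ^ (4 * d) with hP
  have hP0 : 0 < P := by positivity
  have h2 : P * (4 ^ d / 2 * M) ≤ ∑ z, cv (ind A) z ^ (4 * d) := by
    simp_rw [hcv, mul_pow]
    rw [← Finset.mul_sum]
    exact mul_le_mul_of_nonneg_left (Fn_moment A B hA d (by omega) hB hBc) hP0.le
  have h3 : ∑ z, w z * cv (ind A) z ^ (4 * d) ≤ M * (P * (5 / 2) ^ d) := by
    have : ∀ z ∈ (Finset.univ : Finset V), w z * cv (ind A) z ^ (4 * d) ≤ P * (5 / 2) ^ d := by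
      intro z _
      by_cases hz : 5 / 4 ≤ Fn A z
      · simp only [hw, if_pos hz, zero_mul]; positivity
      · simp only [hw, if_neg hz, one_mul]
        rw [hcv, mul_pow]
        refine mul_le_mul_of_nonneg_left ?_ hP0.le
        rw [pow_mul]
        have := Fn_nonneg A z
        have h4 : Fn A z ^ 4 ≤ (5 / 4) ^ 4 := by gcongr; linarith
        refine pow_le_pow_left₀ (by positivity) (h4.trans (by norm_num)) d
    calc _ ≤ _ := Finset.sum_le_card_nsmul _ _ _ this
      _ = _ := by rw [Finset.card_univ, nsmul_eq_mul]
  have h4 : τ * (M * a ^ (4 * d)) = 1 / 2 * M ^ 2 * P := by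
    rw [hτ, hP, div_pow, div_pow, ← pow_mul, mul_comm 2, pow_mul a (4 * d) 2]
    ring
  rw [h4] at h1
  have h5 : M ^ 2 * P * (4 ^ d / 2) ≤ M ^ 2 * P * (1 / 2 + 40 * (5 / 2) ^ d) := by
    calc M ^ 2 * P * (4 ^ d / 2) = M * (P * (4 ^ d / 2 * M)) := by ring
      _ ≤ M * ∑ z, cv (ind A) z ^ (4 * d) := by gcongr
      _ ≤ 1 / 2 * M ^ 2 * P + 40 * (M * ∑ z, w z * cv (ind A) z ^ (4 * d)) := h1
      _ ≤ 1 / 2 * M ^ 2 * P + 40 * (M * (M * (P * (5 / 2) ^ d))) := by gcongr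
      _ = _ := by ring
  have h6 := le_of_mul_le_mul_left h5 (by positivity)
  have h7 : (4 : ℝ) ^ d = (5 / 2) ^ d * (8 / 5) ^ d := by rw [← mul_pow]; norm_num
  have h8 : (8 / 5 : ℝ) ^ 20 ≤ (8 / 5) ^ d := pow_le_pow_right₀ (by norm_num) hd
  have h9 : (1 : ℝ) ≤ (5 / 2) ^ d := one_le_pow₀ (by norm_num)
  have h10 : (1000 : ℝ) ≤ (8 / 5) ^ d := le_trans (by norm_num) h8
  nlinarith

end moments
end Claw

set_option linter.unusedSectionVars false
namespace Claw

section sampling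
open Finset

theorem hoeff {α : Type*} [DecidableEq α] (A : Finset α) (c : α → ℝ) (hc : ∀ a ∈ A, |c a| ≤ 1)
    (h0 : ∑ a ∈ A, c a = 0) (k : ℕ) (ε : ℝ) (hε : 0 ≤ ε) :
    (((Fintype.piFinset (fun _ : Fin k => A)).filter (fun p => k * ε < ∑ i, c (p i))).card : ℝ) ≤
      (A.card : ℝ) ^ k * Real.exp (-(k * ε ^ 2 / 2)) := by
  set T := (Fintype.piFinset (fun _ : Fin k => A)).filter (fun p => k * ε < ∑ i, c (p i)) with hT
  have h1 : ∑ a ∈ A, Real.exp (c a * ε) ≤ A.card * Real.exp (ε ^ 2 / 2) := by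
    calc ∑ a ∈ A, Real.exp (c a * ε) ≤ ∑ a ∈ A, (Real.cosh ε + c a * Real.sinh ε) :=
          Finset.sum_le_sum fun a ha => Real.exp_mul_le_cosh_add_mul_sinh (hc a ha) ε
      _ = A.card * Real.cosh ε := by
          rw [Finset.sum_add_distrib, ← Finset.sum_mul, h0]; simp
      _ ≤ _ := by gcongr; exact Real.cosh_le_exp_half_sq ε
  have h2 : ∑ p ∈ Fintype.piFinset (fun _ : Fin k => A), Real.exp (ε * ∑ i, c (p i)) =
      (∑ a ∈ A, Real.exp (c a * ε)) ^ k := by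
    have := Finset.prod_univ_sum (fun _ : Fin k => A) (fun _ a => Real.exp (c a * ε))
    rw [Finset.prod_const, Finset.card_univ, Fintype.card_fin] at this
    rw [this]
    refine Finset.sum_congr rfl fun p _ => ?_
    rw [← Real.exp_sum, Finset.mul_sum]
    simp_rw [mul_comm]
  have h3 : (T.card : ℝ) * Real.exp (k * ε ^ 2) ≤ (A.card : ℝ) ^ k * Real.exp (k * ε ^ 2 / 2) := by
    calc (T.card : ℝ) * Real.exp (k * ε ^ 2) = ∑ p ∈ T, Real.exp (k * ε ^ 2) := by simp
      _ ≤ ∑ p ∈ T, Real.exp (ε * ∑ i, c (p i)) := by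
          refine Finset.sum_le_sum fun p hp => ?_
          have := (Finset.mem_filter.1 hp).2
          apply Real.exp_le_exp.2
          nlinarith
      _ ≤ ∑ p ∈ Fintype.piFinset (fun _ : Fin k => A), Real.exp (ε * ∑ i, c (p i)) :=
          Finset.sum_le_sum_of_subset_of_nonneg (Finset.filter_subset _ _)
            (fun _ _ _ => (Real.exp_pos _).le)
      _ ≤ (A.card * Real.exp (ε ^ 2 / 2)) ^ k := by
          rw [h2]
          exact pow_le_pow_left₀ (Finset.sum_nonneg fun _ _ => (Real.exp_pos _).le) h1 k
      _ = _ := by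
          rw [mul_pow, ← Real.exp_nat_mul]
          congr 2; ring
  have h4 : (A.card : ℝ) ^ k * Real.exp (-(k * ε ^ 2 / 2)) * Real.exp (k * ε ^ 2) =
      (A.card : ℝ) ^ k * Real.exp (k * ε ^ 2 / 2) := by
    rw [mul_assoc, ← Real.exp_add]
    congr 2; ring
  rw [← h4] at h3
  exact le_of_mul_le_mul_right h3 (Real.exp_pos _)

variable {V : Type*} [AddCommGroup V] [Module (ZMod 2) V] [Fintype V] [DecidableEq V]

/-- Local average of `f` over a translate of `A`. -/
noncomputable def avg (A : Finset V) (f : V → ℝ) (x : V) : ℝ := (∑ a ∈ A, f (x + a)) / A.card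

/-- Sampled average. -/
noncomputable def smp {k : ℕ} (f : V → ℝ) (p : Fin k → V) (x : V) : ℝ := (∑ i, f (x + p i)) / k

theorem avg_mem (A : Finset V) (hA : A.Nonempty) (f : V → ℝ) (hf : ∀ x, 0 ≤ f x ∧ f x ≤ 1) (x : V) :
    0 ≤ avg A f x ∧ avg A f x ≤ 1 := by
  have hc : (0 : ℝ) < A.card := by exact_mod_cast hA.card_pos
  constructor
  · exact div_nonneg (Finset.sum_nonneg fun a _ => (hf _).1) hc.le
  · rw [avg, div_le_one hc]
    calc ∑ a ∈ A, f (x + a) ≤ ∑ a ∈ A, (1 : ℝ) := Finset.sum_le_sum fun a _ => (hf _).2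
      _ = A.card := by simp

theorem sample_bad (A : Finset V) (hA : A.Nonempty) (f : V → ℝ) (hf : ∀ x, 0 ≤ f x ∧ f x ≤ 1)
    (k : ℕ) (hk : 1 ≤ k) (ε : ℝ) (hε : 0 ≤ ε) (x : V) :
    (((Fintype.piFinset (fun _ : Fin k => A)).filter
      (fun p => ε < |smp f p x - avg A f x|)).card : ℝ) ≤
      2 * ((A.card : ℝ) ^ k * Real.exp (-(k * ε ^ 2 / 2))) := by
  have hc : (0 : ℝ) < A.card := by exact_mod_cast hA.card_pos
  have hk0 : (0 : ℝ) < k := by exact_mod_cast hk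
  have hm := avg_mem A hA f hf x
  have hsum : ∑ a ∈ A, (f (x + a) - avg A f x) = 0 := by
    rw [Finset.sum_sub_distrib, Finset.sum_const, nsmul_eq_mul, avg]
    field_simp
    ring
  have habs : ∀ a, |f (x + a) - avg A f x| ≤ 1 := fun a => by
    have := hf (x + a)
    rw [abs_le]; constructor <;> linarith
  have h1 := hoeff A (fun a => f (x + a) - avg A f x) (fun a _ => habs a) hsum k ε hε
  have h2 := hoeff A (fun a => -(f (x + a) - avg A f x)) (fun a _ => by rw [abs_neg]; exact habs a)
    (by rw [Finset.sum_neg_distrib, hsum, neg_zero]) k ε hε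
  have hs : ∀ p : Fin k → V, ∑ i, (f (x + p i) - avg A f x) = k * (smp f p x - avg A f x) := by
    intro p
    rw [Finset.sum_sub_distrib, Finset.sum_const, Finset.card_univ, Fintype.card_fin, nsmul_eq_mul,
      smp]
    field_simp
  have hsub : (Fintype.piFinset (fun _ : Fin k => A)).filter
      (fun p => ε < |smp f p x - avg A f x|) ⊆
      (Fintype.piFinset (fun _ : Fin k => A)).filter
        (fun p => k * ε < ∑ i, (f (x + p i) - avg A f x)) ∪
      (Fintype.piFinset (fun _ : Fin k => A)).filter
        (fun p => k * ε < ∑ i, -(f (x + p i) - avg A f x)) := by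
    intro p hp
    rw [Finset.mem_filter] at hp
    rw [Finset.mem_union, Finset.mem_filter, Finset.mem_filter, Finset.sum_neg_distrib, hs]
    rcases lt_abs.1 hp.2 with h | h
    · left; exact ⟨hp.1, by gcongr⟩
    · right; refine ⟨hp.1, ?_⟩
      rw [← mul_neg]; gcongr
  have h3 := (Finset.card_le_card hsub).trans (Finset.card_union_le _ _)
  have h4 : (((Fintype.piFinset (fun _ : Fin k => A)).filter
      (fun p => ε < |smp f p x - avg A f x|)).card : ℝ) ≤ _ := Nat.cast_le.2 h3
  rw [Nat.cast_add] at h4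
  linarith

theorem card_shift (P : V → Prop) [DecidablePred P] (s : V) :
    (Finset.univ.filter fun x => P (x + s)).card = (Finset.univ.filter P).card := by
  refine Finset.card_bij (fun x _ => x + s) ?_ ?_ ?_
  · intro x hx; simpa using hx
  · intro x _ y _ h; simpa using h
  · intro y hy
    refine ⟨y + s, ?_, ?_⟩
    · have : y + s + s = y := by rw [add_assoc, c2, add_zero]
      simpa [this] using hy
    · simp only [add_assoc, c2, add_zero]

theorem croot_sisask (A : Finset V) (hA : A.Nonempty) (f : V → ℝ) (hf : ∀ x, 0 ≤ f x ∧ f x ≤ 1)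
    (k : ℕ) (hk : 1 ≤ k) (ε : ℝ) (hε : 0 < ε)
    (hke : 4 * Real.exp (-(k * ε ^ 2 / 2)) * Fintype.card V ≤ ε * A.card) :
    ∃ X : Finset V, 1 / 2 * Fintype.card V * ((A.card : ℝ) / Fintype.card V) ^ k ≤ X.card ∧
      ∀ t ∈ X, ∀ t' ∈ X, ((Finset.univ.filter fun x =>
        2 * ε < |avg A f (x + (t + t')) - avg A f x|).card : ℝ) ≤ 2 * ε * A.card := by
  have hc : (0 : ℝ) < A.card := by exact_mod_cast hA.card_pos
  have hM0 : (0 : ℝ) < Fintype.card V := card_pos'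
  set P := Fintype.piFinset (fun _ : Fin k => A) with hP
  have hPc : (P.card : ℝ) = (A.card : ℝ) ^ k := by
    rw [hP, Fintype.card_piFinset]; simp
  let bad : (Fin k → V) → Finset V := fun p =>
    Finset.univ.filter fun x => ε < |smp f p x - avg A f x|
  have hbad : ∑ p ∈ P, ((bad p).card : ℝ) ≤ ε * A.card * (A.card : ℝ) ^ k / 2 := by
    have e1 : ∑ p ∈ P, ((bad p).card : ℝ) =
        ∑ x : V, ((P.filter (fun p => ε < |smp f p x - avg A f x|)).card : ℝ) := by
      simp only [bad, Finset.card_filter]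
      push_cast
      rw [Finset.sum_comm]
    rw [e1]
    calc _ ≤ ∑ x : V, 2 * ((A.card : ℝ) ^ k * Real.exp (-(k * ε ^ 2 / 2))) :=
          Finset.sum_le_sum fun x _ => sample_bad A hA f hf k hk ε hε.le x
      _ = (4 * Real.exp (-(k * ε ^ 2 / 2)) * Fintype.card V) * (A.card : ℝ) ^ k / 2 := by
          rw [Finset.sum_const, Finset.card_univ, nsmul_eq_mul]; ring
      _ ≤ _ := by gcongr
  set T := P.filter (fun p => ((bad p).card : ℝ) ≤ ε * A.card) with hT
  have hTc : (A.card : ℝ) ^ k / 2 ≤ T.card := by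
    have e1 : ((P.filter (fun p => ¬ ((bad p).card : ℝ) ≤ ε * A.card)).card : ℝ) * (ε * A.card) ≤
        ∑ p ∈ P, ((bad p).card : ℝ) := by
      calc _ = ∑ p ∈ P.filter (fun p => ¬ ((bad p).card : ℝ) ≤ ε * A.card), (ε * A.card) := by simp
        _ ≤ ∑ p ∈ P.filter (fun p => ¬ ((bad p).card : ℝ) ≤ ε * A.card), ((bad p).card : ℝ) :=
            Finset.sum_le_sum fun p hp => (not_le.1 (Finset.mem_filter.1 hp).2).le
        _ ≤ _ := Finset.sum_le_sum_of_subset_of_nonneg (Finset.filter_subset _ _)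
            (fun _ _ _ => by positivity)
    have e2 : (T.card : ℝ) + (P.filter (fun p => ¬ ((bad p).card : ℝ) ≤ ε * A.card)).card =
        (A.card : ℝ) ^ k := by
      rw [← hPc]
      exact_mod_cast Finset.card_filter_add_card_filter_not _
    have e3 : ((P.filter (fun p => ¬ ((bad p).card : ℝ) ≤ ε * A.card)).card : ℝ) ≤
        (A.card : ℝ) ^ k / 2 := by
      refine le_of_mul_le_mul_right (e1.trans (hbad.trans (le_of_eq ?_))) (by positivity : 0 < ε * A.card)
      ring
    linarith
  -- pigeonhole
  let X : (Fin k → V) → Finset V := fun b => Finset.univ.filter fun t => (fun i => b i + t) ∈ T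
  have hXsum : ∑ b : Fin k → V, ((X b).card : ℝ) = Fintype.card V * T.card := by
    simp only [X, Finset.card_filter]
    push_cast
    rw [Finset.sum_comm]
    have : ∀ t : V, ∑ b : Fin k → V, (if (fun i => b i + t) ∈ T then (1 : ℝ) else 0) = T.card := by
      intro t
      have := Equiv.sum_comp (Equiv.addRight (fun _ : Fin k => t))
        (fun b => if b ∈ T then (1 : ℝ) else 0)
      refine (Eq.trans ?_ this).trans (by simp)
      exact Finset.sum_congr rfl (fun _ _ => rfl)
    rw [Finset.sum_congr rfl (fun t _ => this t), Finset.sum_const, Finset.card_univ, nsmul_eq_mul]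
  obtain ⟨b, -, hb⟩ : ∃ b ∈ (Finset.univ : Finset (Fin k → V)),
      (Fintype.card V * T.card : ℝ) / (Fintype.card V : ℝ) ^ k ≤ (X b).card := by
    apply Finset.exists_le_of_sum_le ⟨fun _ => 0, Finset.mem_univ _⟩
    rw [hXsum, Finset.sum_const, Finset.card_univ, Fintype.card_pi, Finset.prod_const, nsmul_eq_mul]
    rw [Finset.card_univ, Fintype.card_fin]
    push_cast
    rw [mul_div_cancel₀ _ (by positivity)]
  refine ⟨X b, ?_, ?_⟩
  · refine le_trans ?_ hb
    rw [div_pow, ← mul_div_assoc]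
    have h9 : 1 / 2 * (Fintype.card V : ℝ) * (A.card : ℝ) ^ k ≤ Fintype.card V * T.card := by
      nlinarith
    exact div_le_div_of_nonneg_right h9 (by positivity)
  · have hsm : ∀ t x, smp f (fun i => b i + t) x = smp f b (x + t) := by
      intro t x
      unfold smp
      congr 1
      refine Finset.sum_congr rfl fun i _ => ?_
      congr 1; grind
    have hX : ∀ t ∈ X b, ((Finset.univ.filter fun x =>
        ε < |smp f b (x + t) - avg A f x|).card : ℝ) ≤ ε * A.card := by
      intro t ht
      have := (Finset.mem_filter.1 (Finset.mem_filter.1 ht).2).2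
      simpa only [bad, hsm] using this
    intro t ht t' ht'
    have hsub : (Finset.univ.filter fun x => 2 * ε < |avg A f (x + (t + t')) - avg A f x|) ⊆
        (Finset.univ.filter fun x => ε < |smp f b (x + t') - avg A f x|) ∪
        (Finset.univ.filter fun x =>
          ε < |smp f b ((x + (t + t')) + t) - avg A f (x + (t + t'))|) := by
      intro x hx
      rw [Finset.mem_filter] at hx
      by_contra hcon
      rw [Finset.mem_union, Finset.mem_filter, Finset.mem_filter, not_or] at hcon
      simp only [Finset.mem_univ, true_and, not_lt] at hcon hx
      rw [show x + (t + t') + t = x + t' by have := c2 t; grind] at hcon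
      have h1 := abs_le.1 hcon.1
      have h2 := abs_le.1 hcon.2
      have h3 : |avg A f (x + (t + t')) - avg A f x| ≤ 2 * ε := by
        rw [abs_le]; constructor <;> linarith
      linarith
    have h1 := (Finset.card_le_card hsub).trans (Finset.card_union_le _ _)
    have h2 : ((Finset.univ.filter fun x =>
        2 * ε < |avg A f (x + (t + t')) - avg A f x|).card : ℝ) ≤ _ := Nat.cast_le.2 h1
    rw [Nat.cast_add, card_shift (fun x => ε < |smp f b (x + t) - avg A f x|) (t + t')] at h2
    have h3 := hX t ht
    have h4 := hX t' ht'
    linarith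

theorem iterate_shift (h : V → ℝ) (X : Finset V) (δ η : ℝ)
    (hX : ∀ t ∈ X, ∀ t' ∈ X, ((Finset.univ.filter fun x =>
        δ < |h (x + (t + t')) - h x|).card : ℝ) ≤ η) (ℓ : ℕ) (t : Fin ℓ → V × V)
    (ht : ∀ i, (t i).1 ∈ X ∧ (t i).2 ∈ X) :
    ((Finset.univ.filter fun x =>
        ℓ * δ < |h (x + ∑ i, ((t i).1 + (t i).2)) - h x|).card : ℝ) ≤ ℓ * η := by
  induction ℓ with
  | zero => simp
  | succ ℓ ih =>
    rw [Fin.sum_univ_succ]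
    have h1 := ih (fun i => t i.succ) (fun i => ht _)
    have h2 := hX _ (ht 0).1 _ (ht 0).2
    set σ := ∑ i : Fin ℓ, ((t i.succ).1 + (t i.succ).2)
    set τ := (t 0).1 + (t 0).2
    have hsub : (Finset.univ.filter fun x => ((ℓ + 1 : ℕ) : ℝ) * δ < |h (x + (τ + σ)) - h x|) ⊆
        (Finset.univ.filter fun x => δ < |h (x + τ) - h x|) ∪
        (Finset.univ.filter fun x => ℓ * δ < |h ((x + τ) + σ) - h (x + τ)|) := by
      intro x hx
      rw [Finset.mem_filter] at hx
      by_contra hcon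
      rw [Finset.mem_union, Finset.mem_filter, Finset.mem_filter, not_or] at hcon
      simp only [Finset.mem_univ, true_and, not_lt] at hcon hx
      rw [← add_assoc] at hx
      have h3 := abs_sub_le (h (x + τ + σ)) (h (x + τ)) (h x)
      push_cast at hx
      linarith
    have h3 := (Finset.card_le_card hsub).trans (Finset.card_union_le _ _)
    have h4 : ((Finset.univ.filter fun x =>
        ((ℓ + 1 : ℕ) : ℝ) * δ < |h (x + (τ + σ)) - h x|).card : ℝ) ≤ _ := Nat.cast_le.2 h3
    rw [Nat.cast_add, card_shift (fun x => ℓ * δ < |h (x + σ) - h x|) τ] at h4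
    push_cast at h4 ⊢
    linarith

theorem almost_periods (A : Finset V) (hA : A.Nonempty) (f : V → ℝ) (hf : ∀ x, 0 ≤ f x ∧ f x ≤ 1)
    (k : ℕ) (hk : 1 ≤ k) (ε : ℝ) (hε : 0 < ε)
    (hke : 4 * Real.exp (-(k * ε ^ 2 / 2)) * Fintype.card V ≤ ε * A.card) (ℓ : ℕ) :
    ∃ X : Finset V, 1 / 2 * Fintype.card V * ((A.card : ℝ) / Fintype.card V) ^ k ≤ X.card ∧
      ∀ t : Fin ℓ → V × V, (∀ i, (t i).1 ∈ X ∧ (t i).2 ∈ X) →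
        pairs A f - 4 * ℓ * ε * (A.card : ℝ) ^ 2 ≤
          pairs A (fun z => f (z + ∑ i, ((t i).1 + (t i).2))) := by
  obtain ⟨X, hXc, hX⟩ := croot_sisask A hA f hf k hk ε hε hke
  refine ⟨X, hXc, fun t ht => ?_⟩
  have hc : (0 : ℝ) < A.card := by exact_mod_cast hA.card_pos
  have h1 := iterate_shift (avg A f) X (2 * ε) (2 * ε * A.card) hX ℓ t ht
  set σ := ∑ i, ((t i).1 + (t i).2) with hσ
  set Bd := Finset.univ.filter fun x => ℓ * (2 * ε) < |avg A f (x + σ) - avg A f x| with hBd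
  have hav : ∀ x, ∑ y ∈ A, f (x + y) = A.card * avg A f x := fun x => by
    rw [avg]; field_simp
  have e1 : pairs A f = A.card * ∑ x ∈ A, avg A f x := by
    rw [pairs, Finset.mul_sum]
    exact Finset.sum_congr rfl fun x _ => hav x
  have e2 : pairs A (fun z => f (z + σ)) = A.card * ∑ x ∈ A, avg A f (x + σ) := by
    rw [pairs, Finset.mul_sum]
    refine Finset.sum_congr rfl fun x _ => ?_
    rw [← hav]
    exact Finset.sum_congr rfl fun y _ => by congr 1; grind
  have e3 : ∑ x ∈ A, avg A f x ≤ ∑ x ∈ A, (avg A f (x + σ) + ℓ * (2 * ε) + ind Bd x) := by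
    refine Finset.sum_le_sum fun x _ => ?_
    have a1 := avg_mem A hA f hf x
    have a2 := avg_mem A hA f hf (x + σ)
    by_cases hx : x ∈ Bd
    · rw [ind, if_pos hx]
      have : 0 ≤ ℓ * (2 * ε) := by positivity
      linarith
    · rw [ind, if_neg hx]
      simp only [hBd, Finset.mem_filter, Finset.mem_univ, true_and, not_lt] at hx
      have := abs_le.1 hx
      linarith
  have e4 : ∑ x ∈ A, ind Bd x ≤ ℓ * (2 * ε * A.card) := by
    calc ∑ x ∈ A, ind Bd x ≤ ∑ x, ind Bd x :=
          Finset.sum_le_sum_of_subset_of_nonneg (Finset.subset_univ _) (fun x _ _ => ind_nonneg _ _)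
      _ = Bd.card := sum_ind _
      _ ≤ _ := h1
  rw [Finset.sum_add_distrib, Finset.sum_add_distrib, Finset.sum_const, nsmul_eq_mul] at e3
  rw [e1, e2]
  nlinarith

end sampling
end Claw

set_option linter.unusedSectionVars false
namespace Claw

section fourier
open Finset
variable {V : Type*} [AddCommGroup V] [Module (ZMod 2) V] [Fintype V] [DecidableEq V]

noncomputable instance dualFintype : Fintype (Module.Dual (ZMod 2) V) :=
  Fintype.ofInjective (fun φ => (φ : V → ZMod 2)) DFunLike.coe_injective

/-- Real characters of an elementary abelian two-group. -/
noncomputable def chr (φ : Module.Dual (ZMod 2) V) (x : V) : ℝ := if φ x = 0 then 1 else -1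

theorem sgn_add (a b : ZMod 2) : (if a + b = 0 then (1 : ℝ) else -1) =
    (if a = 0 then 1 else -1) * (if b = 0 then 1 else -1) := by
  have h : ∀ a : ZMod 2, a = 0 ∨ a = 1 := by decide
  have h1 : (1 : ZMod 2) + 1 = 0 := by decide
  rcases h a with rfl | rfl <;> rcases h b with rfl | rfl <;> simp [h1]

theorem chr_add (φ : Module.Dual (ZMod 2) V) (x y : V) : chr φ (x + y) = chr φ x * chr φ y := by
  unfold chr; rw [map_add]; exact sgn_add _ _

theorem chr_add' (φ ψ : Module.Dual (ZMod 2) V) (x : V) : chr (φ + ψ) x = chr φ x * chr ψ x := by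
  unfold chr; rw [LinearMap.add_apply]; exact sgn_add _ _

theorem chr_zero (φ : Module.Dual (ZMod 2) V) : chr φ 0 = 1 := by simp [chr]
theorem chr_zero' (x : V) : chr (0 : Module.Dual (ZMod 2) V) x = 1 := by simp [chr]

theorem chr_abs (φ : Module.Dual (ZMod 2) V) (x : V) : |chr φ x| = 1 := by
  unfold chr; split_ifs <;> simp

theorem chr_sum (φ : Module.Dual (ZMod 2) V) {ι : Type*} (s : Finset ι) (f : ι → V) :
    chr φ (∑ i ∈ s, f i) = ∏ i ∈ s, chr φ (f i) := by
  classical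
  induction s using Finset.induction_on with
  | empty => simp [chr_zero]
  | insert a s ha ih => rw [Finset.sum_insert ha, Finset.prod_insert ha, chr_add, ih]

theorem chr_sum' {ι : Type*} (s : Finset ι) (f : ι → Module.Dual (ZMod 2) V) (x : V) :
    chr (∑ i ∈ s, f i) x = ∏ i ∈ s, chr (f i) x := by
  classical
  induction s using Finset.induction_on with
  | empty => simp [chr_zero']
  | insert a s ha ih => rw [Finset.sum_insert ha, Finset.prod_insert ha, chr_add', ih]

theorem sum_chr {φ : Module.Dual (ZMod 2) V} (h : φ ≠ 0) : ∑ x, chr φ x = 0 := by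
  obtain ⟨y, hy⟩ : ∃ y, φ y ≠ 0 := by
    by_contra hcon; push Not at hcon; exact h (LinearMap.ext hcon)
  have h1 := Equiv.sum_comp (Equiv.addRight y) (chr φ)
  simp only [Equiv.coe_addRight, chr_add, ← Finset.sum_mul] at h1
  have h2 : chr φ y = -1 := by simp [chr, hy]
  rw [h2] at h1; linarith

open Classical in
theorem sum_dual (Y : Submodule (ZMod 2) (Module.Dual (ZMod 2) V)) (x : V) :
    ∑ φ : Module.Dual (ZMod 2) V, (if φ ∈ Y then chr φ x else 0) =
      if x ∈ Y.dualCoannihilator then (Nat.card Y : ℝ) else 0 := by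
  split_ifs with h
  · rw [Submodule.mem_dualCoannihilator] at h
    rw [← Finset.sum_filter]
    rw [Finset.sum_congr rfl (g := fun _ => (1 : ℝ))]
    · rw [Finset.sum_const, nsmul_eq_mul, mul_one, Nat.card_eq_fintype_card, Fintype.card_subtype]
    · intro φ hφ
      simp only [Finset.mem_filter, Finset.mem_univ, true_and] at hφ
      simp [chr, h φ hφ]
  · rw [Submodule.mem_dualCoannihilator] at h
    push Not at h
    obtain ⟨ψ, hψ, hx⟩ := h
    have h1 := Equiv.sum_comp (Equiv.addRight ψ) (fun φ => if φ ∈ Y then chr φ x else 0)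
    have h2 : chr ψ x = -1 := by simp [chr, hx]
    have h3 : ∀ φ, (if φ + ψ ∈ Y then chr (φ + ψ) x else 0) = - (if φ ∈ Y then chr φ x else 0) := by
      intro φ
      rw [chr_add', h2, Submodule.add_mem_iff_left _ hψ]
      split_ifs <;> simp
    have h4 : ∑ φ, (if φ + ψ ∈ Y then chr (φ + ψ) x else 0) =
        - ∑ φ, (if φ ∈ Y then chr φ x else 0) := by
      rw [← Finset.sum_neg_distrib]
      exact Finset.sum_congr rfl (fun φ _ => h3 φ)
    have h5 := h4.symm.trans h1
    linarith

theorem card_dual : Fintype.card (Module.Dual (ZMod 2) V) = Fintype.card V := by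
  rw [Module.card_eq_pow_finrank (K := ZMod 2) (V := V),
    Module.card_eq_pow_finrank (K := ZMod 2) (V := Module.Dual (ZMod 2) V),
    Subspace.dual_finrank_eq]

theorem card_mul (Y : Submodule (ZMod 2) (Module.Dual (ZMod 2) V)) :
    Nat.card Y * Nat.card Y.dualCoannihilator = Fintype.card V := by
  rw [Module.card_eq_pow_finrank (K := ZMod 2) (V := V),
    Module.natCard_eq_pow_finrank (K := ZMod 2) (V := Y),
    Module.natCard_eq_pow_finrank (K := ZMod 2) (V := Y.dualCoannihilator),
    ← Subspace.finrank_add_finrank_dualCoannihilator_eq Y, pow_add]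
  simp

theorem sum_dual_all (x : V) :
    ∑ φ : Module.Dual (ZMod 2) V, chr φ x = if x = 0 then (Fintype.card V : ℝ) else 0 := by
  have := sum_dual (⊤ : Submodule (ZMod 2) (Module.Dual (ZMod 2) V)) x
  simp only [Submodule.mem_top, if_true] at this
  rw [this]
  have h1 : x ∈ (⊤ : Submodule (ZMod 2) (Module.Dual (ZMod 2) V)).dualCoannihilator ↔ x = 0 := by
    rw [Submodule.mem_dualCoannihilator]
    simp only [Submodule.mem_top, forall_const]
    exact Module.forall_dual_apply_eq_zero_iff (ZMod 2) x
  simp only [h1]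
  congr 1
  rw [← card_dual, ← Nat.card_eq_fintype_card]
  exact_mod_cast Nat.card_congr (Submodule.topEquiv (R := ZMod 2) (M := Module.Dual (ZMod 2) V)).toEquiv

/-- Fourier coefficients. -/
noncomputable def ft (A : Finset V) (φ : Module.Dual (ZMod 2) V) : ℝ := ∑ x ∈ A, chr φ x

theorem ft_abs_le (A : Finset V) (φ : Module.Dual (ZMod 2) V) : |ft A φ| ≤ A.card := by
  refine (Finset.abs_sum_le_sum_abs _ _).trans ?_
  simp [chr_abs]

theorem ft_sq (A : Finset V) (φ : Module.Dual (ZMod 2) V) :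
    ft A φ ^ 2 = ∑ x ∈ A, ∑ y ∈ A, chr φ (x + y) := by
  rw [sq, ft, Finset.sum_mul_sum]
  simp only [chr_add]

theorem cv_fourier (A : Finset V) (z : V) :
    Fintype.card V * cv (ind A) z = ∑ φ, ft A φ ^ 2 * chr φ z := by
  simp only [ft_sq, Finset.sum_mul, ← chr_add]
  rw [Finset.sum_comm]
  have h1 : ∀ x ∈ A, ∑ φ : Module.Dual (ZMod 2) V, ∑ y ∈ A, chr φ (x + y + z) =
      Fintype.card V * ind A (x + z) := by
    intro x _
    rw [Finset.sum_comm]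
    have h2 : ∀ y, x + y + z = 0 ↔ y = x + z := by
      intro y
      have := c2 x; have := c2 y; have := c2 z
      constructor
      · intro h; grind
      · intro h; grind
    simp only [sum_dual_all, h2]
    rw [Finset.sum_ite_eq']
    unfold ind
    simp
  rw [Finset.sum_congr rfl h1, ← Finset.mul_sum]
  congr 1
  unfold cv
  rw [← Finset.sum_subset (Finset.subset_univ A)]
  · refine Finset.sum_congr rfl fun x hx => ?_
    simp [ind, hx]
  · intro x _ hx
    simp [ind, hx]

theorem parseval (A : Finset V) : ∑ φ, ft A φ ^ 2 = Fintype.card V * A.card := by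
  have := cv_fourier A 0
  simp only [chr_zero, mul_one] at this
  rw [← this]
  congr 1
  unfold cv
  rw [← sum_ind A]
  refine Finset.sum_congr rfl fun x _ => ?_
  rw [add_zero, ind]; split_ifs <;> simp

theorem ft_pairs (A X : Finset V) (φ : Module.Dual (ZMod 2) V) (ℓ : ℕ) :
    ∑ t ∈ Fintype.piFinset (fun _ : Fin ℓ => X ×ˢ X),
      pairs A (fun z => chr φ (z + ∑ i, ((t i).1 + (t i).2))) = ft A φ ^ 2 * (ft X φ ^ 2) ^ ℓ := by
  have h1 : ∀ t : Fin ℓ → V × V, pairs A (fun z => chr φ (z + ∑ i, ((t i).1 + (t i).2))) =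
      ft A φ ^ 2 * ∏ i, chr φ ((t i).1 + (t i).2) := by
    intro t
    simp only [pairs, chr_add φ _ (∑ i, _), ← Finset.sum_mul, ft_sq, chr_sum]
  simp only [h1, ← Finset.mul_sum]
  congr 1
  have := Finset.prod_univ_sum (fun _ : Fin ℓ => X ×ˢ X) (fun _ (p : V × V) => chr φ (p.1 + p.2))
  rw [← this, Finset.prod_const, Finset.card_univ, Fintype.card_fin, ft_sq, Finset.sum_product]

theorem riesz {D : ℕ} (g : Fin D → Module.Dual (ZMod 2) V) (hg : LinearIndependent (ZMod 2) g)
    (e : Fin D → ℝ) : ∑ x, ∏ i, (1 + e i * chr (g i) x) = Fintype.card V := by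
  simp only [Finset.prod_one_add]
  rw [Finset.sum_comm, Finset.sum_eq_single ∅]
  · simp
  · intro t _ ht
    simp only [Finset.prod_mul_distrib, ← Finset.mul_sum, ← chr_sum']
    rw [sum_chr, mul_zero]
    intro h0
    obtain ⟨i, hi⟩ := Finset.nonempty_iff_ne_empty.2 ht
    have := linearIndependent_iff'.1 hg t (fun _ => 1) (by simpa using h0) i hi
    exact one_ne_zero this
  · simp

theorem exp_bd (t : ℝ) (ht : t = 1 ∨ t = -1) : Real.exp (t / 2 - 1 / 5) ≤ 1 + 1 / 2 * t := by
  rcases ht with rfl | rfl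
  · have h1 := Real.add_one_le_exp (-(3 / 10 : ℝ))
    have h2 : Real.exp (3 / 10) * Real.exp (-(3 / 10)) = 1 := by rw [← Real.exp_add]; simp
    have h3 := Real.exp_pos (3 / 10)
    norm_num
    nlinarith
  · have h1 : Real.exp (-(7 / 10)) ≤ Real.exp (- Real.log 2) := by
      have := Real.log_two_lt_d9
      apply Real.exp_le_exp.2
      linarith
    rw [Real.exp_neg (Real.log 2), Real.exp_log (by norm_num)] at h1
    norm_num at h1 ⊢
    exact h1

/-- The large spectrum. -/
def spec (X : Finset V) : Set (Module.Dual (ZMod 2) V) := {φ | (X.card : ℝ) ≤ 2 * |ft X φ|}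

theorem chang (X : Finset V) (hX : X.Nonempty) :
    (X.card : ℝ) * Real.exp (Module.finrank (ZMod 2) (Submodule.span (ZMod 2) (spec X)) / 20) ≤
      Fintype.card V := by
  have hex := Submodule.exists_fun_fin_finrank_span_eq (ZMod 2) (spec X)
  generalize Module.finrank (ZMod 2) (Submodule.span (ZMod 2) (spec X)) = D at hex ⊢
  obtain ⟨g, hgs, -, hg⟩ := hex
  have hc : (0 : ℝ) < X.card := by exact_mod_cast hX.card_pos
  let e : Fin D → ℝ := fun i => if 0 ≤ ft X (g i) then 1 else -1
  have he : ∀ i, e i * ft X (g i) = |ft X (g i)| := by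
    intro i
    simp only [e]
    split_ifs with h
    · rw [abs_of_nonneg h, one_mul]
    · rw [abs_of_neg (not_le.1 h)]; ring
  have het : ∀ i x, e i * chr (g i) x = 1 ∨ e i * chr (g i) x = -1 := by
    intro i x
    simp only [e, chr]
    split_ifs <;> simp
  let y : V → ℝ := fun x => ∑ i, (e i * chr (g i) x / 2 - 1 / 5)
  have h1 : ∑ x ∈ X, Real.exp (y x) ≤ Fintype.card V := by
    rw [← riesz g hg (fun i => 1 / 2 * e i)]
    have hp : ∀ x, Real.exp (y x) ≤ ∏ i, (1 + 1 / 2 * e i * chr (g i) x) := by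
      intro x
      simp only [y]
      rw [Real.exp_sum]
      refine Finset.prod_le_prod (fun i _ => (Real.exp_pos _).le) fun i _ => ?_
      rw [mul_assoc]
      exact exp_bd _ (het i x)
    calc _ ≤ ∑ x ∈ X, ∏ i, (1 + 1 / 2 * e i * chr (g i) x) := Finset.sum_le_sum fun x _ => hp x
      _ ≤ _ := Finset.sum_le_sum_of_subset_of_nonneg (Finset.subset_univ _)
        fun x _ _ => (Real.exp_pos _).le.trans (hp x)
  have h2 : (X.card : ℝ) * (D / 20) ≤ ∑ x ∈ X, y x := by
    simp only [y]
    rw [Finset.sum_comm]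
    have h3 : ∀ i : Fin D, (X.card : ℝ) / 20 ≤ ∑ x ∈ X, (e i * chr (g i) x / 2 - 1 / 5) := by
      intro i
      have h4 : ∑ x ∈ X, (e i * chr (g i) x / 2 - 1 / 5) = e i * ft X (g i) / 2 - X.card / 5 := by
        rw [Finset.sum_sub_distrib, Finset.sum_const, nsmul_eq_mul, ← Finset.sum_div,
          ← Finset.mul_sum, ft]
        ring
      rw [h4, he]
      have : (X.card : ℝ) ≤ 2 * |ft X (g i)| := hgs i
      linarith
    calc (X.card : ℝ) * (D / 20) = ∑ i : Fin D, (X.card : ℝ) / 20 := by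
          rw [Finset.sum_const, Finset.card_univ, Fintype.card_fin, nsmul_eq_mul]; ring
      _ ≤ _ := Finset.sum_le_sum fun i _ => h3 i
  refine le_trans ?_ h1
  have h5 : ∀ x ∈ X, Real.exp (D / 20) * (1 + (y x - D / 20)) ≤ Real.exp (y x) := by
    intro x _
    have h6 : Real.exp (y x) = Real.exp (D / 20) * Real.exp (y x - D / 20) := by
      rw [← Real.exp_add]; congr 1; ring
    rw [h6]
    refine mul_le_mul_of_nonneg_left ?_ (Real.exp_pos _).le
    linarith [Real.add_one_le_exp (y x - D / 20)]
  refine le_trans ?_ (Finset.sum_le_sum h5)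
  rw [← Finset.mul_sum, Finset.sum_add_distrib, Finset.sum_sub_distrib, Finset.sum_const,
    Finset.sum_const, nsmul_eq_mul, nsmul_eq_mul]
  have := Real.exp_pos ((D : ℝ) / 20)
  nlinarith

end fourier
end Claw

set_option linter.unusedSectionVars false
namespace Claw

section step
open Finset
variable {V : Type*} [AddCommGroup V] [Module (ZMod 2) V] [Fintype V] [DecidableEq V]

open Classical in
theorem spec_mass (A A' X : Finset V) (hA : A.Nonempty) (hA' : A'.Nonempty) (hX : X.Nonempty)
    (d : ℕ) (hd : 20 ≤ d) (hAc : (Fintype.card V : ℝ) ≤ 2 ^ d * A.card)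
    (h : ∀ t : Fin d → V × V, (∀ i, (t i).1 ∈ X ∧ (t i).2 ∈ X) →
      19 / 20 * (A'.card : ℝ) ^ 2 ≤
        pairs A' (fun z => if 5 / 4 ≤ Fn A (z + ∑ i, ((t i).1 + (t i).2)) then 1 else 0)) :
    9 / 8 * (A.card : ℝ) ^ 2 ≤ ∑ φ : Module.Dual (ZMod 2) V,
      if φ ∈ Submodule.span (ZMod 2) (spec X) then ft A φ ^ 2 else 0 := by
  have hc : (0 : ℝ) < A.card := by exact_mod_cast hA.card_pos
  have hc' : (0 : ℝ) < A'.card := by exact_mod_cast hA'.card_pos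
  have hcX : (0 : ℝ) < X.card := by exact_mod_cast hX.card_pos
  have hM0 : (0 : ℝ) < Fintype.card V := card_pos'
  set P := Fintype.piFinset (fun _ : Fin d => X ×ˢ X) with hP
  have hPc : (P.card : ℝ) = ((X.card : ℝ) ^ 2) ^ d := by
    rw [hP, Fintype.card_piFinset]; simp [sq]
  have hFn : ∀ z, Fn A z = ∑ φ, ft A φ ^ 2 / (A.card : ℝ) ^ 2 * chr φ z := by
    intro z
    have := cv_fourier A z
    rw [Fn, div_mul_eq_mul_div, this, Finset.sum_div]
    exact Finset.sum_congr rfl fun φ _ => by ring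
  have h1 : ∀ t ∈ P, 19 / 16 * (A'.card : ℝ) ^ 2 ≤
      pairs A' (fun z => Fn A (z + ∑ i, ((t i).1 + (t i).2))) := by
    intro t ht
    have h2 := h t (fun i => by
      have := Fintype.mem_piFinset.1 ht i
      exact Finset.mem_product.1 this)
    have h3 : 5 / 4 * pairs A' (fun z => if 5 / 4 ≤ Fn A (z + ∑ i, ((t i).1 + (t i).2)) then 1 else 0)
        ≤ pairs A' (fun z => Fn A (z + ∑ i, ((t i).1 + (t i).2))) := by
      unfold pairs
      simp only [Finset.mul_sum]
      refine Finset.sum_le_sum fun x _ => Finset.sum_le_sum fun y _ => ?_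
      split_ifs with hh
      · linarith
      · rw [mul_zero]; exact Fn_nonneg _ _
    linarith
  have h2 : ∑ t ∈ P, pairs A' (fun z => Fn A (z + ∑ i, ((t i).1 + (t i).2))) =
      ∑ φ, ft A φ ^ 2 / (A.card : ℝ) ^ 2 * (ft A' φ ^ 2 * (ft X φ ^ 2) ^ d) := by
    simp only [hFn, ← ft_pairs, Finset.mul_sum]
    rw [Finset.sum_comm (s := Finset.univ)]
    refine Finset.sum_congr rfl fun t _ => ?_
    simp only [pairs, Finset.mul_sum]
    rw [Finset.sum_comm (s := Finset.univ)]
    refine Finset.sum_congr rfl fun x _ => ?_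
    rw [Finset.sum_comm (s := Finset.univ)]
  have h3 : ((X.card : ℝ) ^ 2) ^ d * (19 / 16 * (A'.card : ℝ) ^ 2) ≤
      ∑ φ, ft A φ ^ 2 / (A.card : ℝ) ^ 2 * (ft A' φ ^ 2 * (ft X φ ^ 2) ^ d) := by
    rw [← h2, ← hPc, ← nsmul_eq_mul]
    exact Finset.card_nsmul_le_sum _ _ _ h1
  have h4 : ∀ φ, ft A φ ^ 2 / (A.card : ℝ) ^ 2 * (ft A' φ ^ 2 * (ft X φ ^ 2) ^ d) ≤
      ((X.card : ℝ) ^ 2) ^ d * (A'.card : ℝ) ^ 2 / (A.card : ℝ) ^ 2 *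
      ((if φ ∈ Submodule.span (ZMod 2) (spec X) then ft A φ ^ 2 else 0) +
        ft A φ ^ 2 * (1 / 4) ^ d) := by
    intro φ
    have e1 : ft A' φ ^ 2 ≤ (A'.card : ℝ) ^ 2 := by
      rw [← sq_abs]; gcongr; exact ft_abs_le _ _
    have e2 : (ft X φ ^ 2) ^ d ≤ ((X.card : ℝ) ^ 2) ^ d *
        ((if φ ∈ Submodule.span (ZMod 2) (spec X) then 1 else 0) + (1 / 4) ^ d) := by
      split_ifs with hh
      · have : ft X φ ^ 2 ≤ (X.card : ℝ) ^ 2 := by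
          rw [← sq_abs]; gcongr; exact ft_abs_le _ _
        have h5 : (ft X φ ^ 2) ^ d ≤ ((X.card : ℝ) ^ 2) ^ d := by gcongr
        have h6 : (0 : ℝ) ≤ ((X.card : ℝ) ^ 2) ^ d * (1 / 4) ^ d := by positivity
        linarith
      · have hn : ¬ (X.card : ℝ) ≤ 2 * |ft X φ| := fun hcon => hh (Submodule.subset_span hcon)
        rw [zero_add, ← mul_pow]
        have : ft X φ ^ 2 ≤ (X.card : ℝ) ^ 2 * (1 / 4) := by
          rw [← sq_abs]
          have := abs_nonneg (ft X φ)
          nlinarith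
        gcongr
    calc _ ≤ ft A φ ^ 2 / (A.card : ℝ) ^ 2 * ((A'.card : ℝ) ^ 2 * (((X.card : ℝ) ^ 2) ^ d *
        ((if φ ∈ Submodule.span (ZMod 2) (spec X) then 1 else 0) + (1 / 4) ^ d))) := by gcongr
      _ = _ := by split_ifs <;> ring
  have h5 := h3.trans (Finset.sum_le_sum fun φ _ => h4 φ)
  rw [← Finset.mul_sum, Finset.sum_add_distrib, ← Finset.sum_mul, parseval] at h5
  set S := ∑ φ : Module.Dual (ZMod 2) V,
      if φ ∈ Submodule.span (ZMod 2) (spec X) then ft A φ ^ 2 else 0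
  have h6 : (Fintype.card V : ℝ) * A.card * (1 / 4) ^ d ≤ 1 / 16 * (A.card : ℝ) ^ 2 := by
    have e1 : (1 / 4 : ℝ) ^ d * 2 ^ d = (1 / 2) ^ d := by rw [← mul_pow]; norm_num
    have e2 : (1 / 2 : ℝ) ^ d ≤ (1 / 2) ^ 4 := pow_le_pow_of_le_one (by norm_num) (by norm_num) (by omega)
    calc (Fintype.card V : ℝ) * A.card * (1 / 4) ^ d ≤ (2 ^ d * A.card) * A.card * (1 / 4) ^ d := by gcongr
      _ = (A.card : ℝ) ^ 2 * ((1 / 4 : ℝ) ^ d * 2 ^ d) := by ring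
      _ ≤ (A.card : ℝ) ^ 2 * (1 / 2) ^ 4 := by rw [e1]; gcongr
      _ = _ := by ring
  have h7 : 19 / 16 * (A.card : ℝ) ^ 2 ≤ S + Fintype.card V * A.card * (1 / 4) ^ d := by
    have e0 : 0 < ((X.card : ℝ) ^ 2) ^ d * (A'.card : ℝ) ^ 2 / (A.card : ℝ) ^ 2 := by positivity
    refine le_of_mul_le_mul_left (le_trans (le_of_eq ?_) h5) e0
    field_simp
  linarith

open Classical in
theorem coset_incr (A : Finset V) (hA : A.Nonempty) (Y : Submodule (ZMod 2) (Module.Dual (ZMod 2) V))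
    (h : 9 / 8 * (A.card : ℝ) ^ 2 ≤ ∑ φ : Module.Dual (ZMod 2) V, if φ ∈ Y then ft A φ ^ 2 else 0) :
    ∃ x, 9 / 8 * (A.card : ℝ) * Nat.card Y.dualCoannihilator ≤
      Nat.card {w : Y.dualCoannihilator // x + (w : V) ∈ A} * Fintype.card V := by
  have hc : (0 : ℝ) < A.card := by exact_mod_cast hA.card_pos
  have h1 : (∑ φ : Module.Dual (ZMod 2) V, if φ ∈ Y then ft A φ ^ 2 else 0) =
      ∑ x ∈ A, (Nat.card Y : ℝ) * (A.filter (fun y => x + y ∈ Y.dualCoannihilator)).card := by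
    have e1 : ∀ φ : Module.Dual (ZMod 2) V, (if φ ∈ Y then ft A φ ^ 2 else 0) =
        ∑ x ∈ A, ∑ y ∈ A, (if φ ∈ Y then chr φ (x + y) else 0) := by
      intro φ
      split_ifs with hh
      · exact ft_sq _ _
      · simp
    rw [Finset.sum_congr rfl fun φ _ => e1 φ, Finset.sum_comm]
    refine Finset.sum_congr rfl fun x _ => ?_
    rw [Finset.sum_comm, Finset.sum_congr rfl fun y _ => sum_dual Y (x + y),
      ← Finset.sum_filter, Finset.sum_const, nsmul_eq_mul, mul_comm]
  rw [h1] at h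
  obtain ⟨x, -, hx⟩ : ∃ x ∈ A, 9 / 8 * (A.card : ℝ) ≤
      (Nat.card Y : ℝ) * (A.filter (fun y => x + y ∈ Y.dualCoannihilator)).card := by
    apply Finset.exists_le_of_sum_le hA
    rw [Finset.sum_const, nsmul_eq_mul]
    linarith
  refine ⟨x, ?_⟩
  have h2 : Nat.card {w : Y.dualCoannihilator // x + (w : V) ∈ A} =
      (A.filter (fun y => x + y ∈ Y.dualCoannihilator)).card := by
    rw [Nat.card_eq_fintype_card, Fintype.card_subtype]
    refine Finset.card_bij (fun w _ => x + (w : V)) ?_ ?_ ?_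
    · intro w hw
      simp only [Finset.mem_filter, Finset.mem_univ, true_and] at hw ⊢
      refine ⟨hw, ?_⟩
      rw [← add_assoc, c2, zero_add]; exact w.2
    · intro a _ b _ hab
      exact Subtype.ext (add_left_cancel hab)
    · intro y hy
      rw [Finset.mem_filter] at hy
      have e : x + (x + y) = y := by rw [← add_assoc, c2, zero_add]
      exact ⟨⟨x + y, hy.2⟩, by simp [e, hy.1], e⟩
  have h3 : (Nat.card Y : ℝ) * Nat.card Y.dualCoannihilator = Fintype.card V := by
    exact_mod_cast card_mul Y
  rw [h2, ← h3]
  have := mul_le_mul_of_nonneg_right hx (Nat.cast_nonneg (α := ℝ) (Nat.card Y.dualCoannihilator))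
  linarith

end step
end Claw

set_option linter.unusedSectionVars false
namespace Claw

section core
open Finset
variable {V : Type*} [AddCommGroup V] [Module (ZMod 2) V] [Fintype V] [DecidableEq V]

theorem dens_pow {M a : ℝ} (hM : 0 < M) (ha : 0 < a) (e k : ℕ) (h : M ≤ 2 ^ e * a) :
    1 ≤ 2 ^ (e * k) * (a / M) ^ k := by
  rw [pow_mul, ← mul_pow]
  refine one_le_pow₀ ?_
  rw [← mul_div_assoc, one_le_div hM]
  exact h

theorem exp_six (d : ℕ) : Real.exp (-(6 * (d : ℝ) ^ 2)) * 2 ^ (8 * d ^ 2) ≤ 1 := by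
  have h1 : (2 : ℝ) ^ 8 ≤ Real.exp 6 := by
    have e1 : Real.exp 6 = Real.exp 1 ^ 6 := by rw [← Real.exp_nat_mul]; norm_num
    have e2 := Real.exp_one_gt_d9
    rw [e1]
    calc (2 : ℝ) ^ 8 ≤ (2.7 : ℝ) ^ 6 := by norm_num
      _ ≤ _ := by gcongr; linarith
  have h2 : Real.exp (6 * (d : ℝ) ^ 2) = Real.exp 6 ^ (d ^ 2) := by
    rw [← Real.exp_nat_mul]; push_cast; ring_nf
  rw [Real.exp_neg, inv_mul_le_iff₀ (Real.exp_pos _), mul_one, h2, pow_mul]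
  gcongr

theorem core_step (A B : Finset V) (hA : A.Nonempty) (d : ℕ) (hd : 20 ≤ d)
    (hB : ∀ z ∈ B, cv (ind A) z = 0) (hBc : (Fintype.card V : ℝ) ≤ 2 ^ d * B.card)
    (hAc : (Fintype.card V : ℝ) ≤ 2 ^ d * A.card) :
    ∃ (W : Submodule (ZMod 2) V) (x : V),
      Module.finrank (ZMod 2) V ≤ Module.finrank (ZMod 2) W + 40000000 * d ^ 6 ∧
      9 / 8 * (A.card : ℝ) * Nat.card W ≤
        Nat.card {w : W // x + (w : V) ∈ A} * Fintype.card V := by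
  classical
  have hc : (0 : ℝ) < A.card := by exact_mod_cast hA.card_pos
  have hM0 : (0 : ℝ) < Fintype.card V := card_pos'
  have hd0 : (0 : ℝ) < d := by exact_mod_cast (by omega : 0 < d)
  obtain ⟨A', hA'c, hA'p⟩ := sift A B hA d hd hB hBc
  have hA'0 : (0 : ℝ) < A'.card := lt_of_lt_of_le (by positivity) hA'c
  have hA' : A'.Nonempty := by
    rw [← Finset.card_pos]; exact_mod_cast hA'0
  have h1 : (Fintype.card V : ℝ) ≤ 2 ^ (5 * d ^ 2) * A'.card := by
    have e1 := dens_pow hM0 hc d (4 * d) hAc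
    have e2 : (2 : ℝ) ^ (d * (4 * d) + 1) ≤ 2 ^ (5 * d ^ 2) :=
      pow_le_pow_right₀ (by norm_num) (by nlinarith)
    calc (Fintype.card V : ℝ) = Fintype.card V * 1 := by ring
      _ ≤ Fintype.card V * (2 ^ (d * (4 * d)) * ((A.card : ℝ) / Fintype.card V) ^ (4 * d)) := by gcongr
      _ = 2 ^ (d * (4 * d) + 1) *
          (1 / 2 * Fintype.card V * ((A.card : ℝ) / Fintype.card V) ^ (4 * d)) := by ring
      _ ≤ _ := by gcongr
  set f : V → ℝ := fun z => if 5 / 4 ≤ Fn A z then 1 else 0 with hf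
  have h2 : 39 / 40 * (A'.card : ℝ) ^ 2 ≤ pairs A' f := by
    have : pairs A' f + pairs A' (fun z => if 5 / 4 ≤ Fn A z then 0 else 1) = (A'.card : ℝ) ^ 2 := by
      rw [← pairs_one]
      simp only [pairs, ← Finset.sum_add_distrib, hf]
      refine Finset.sum_congr rfl fun x _ => Finset.sum_congr rfl fun y _ => ?_
      split_ifs <;> simp
    linarith
  set k := 307200 * d ^ 4 with hk
  have hk1 : 1 ≤ k := by have : 0 < d ^ 4 := by positivity
                         omega
  have hkε : -((k : ℝ) * (1 / (160 * d)) ^ 2 / 2) = -(6 * (d : ℝ) ^ 2) := by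
    rw [hk]; push_cast; field_simp; norm_num
  have hke : 4 * Real.exp (-((k : ℝ) * (1 / (160 * d)) ^ 2 / 2)) * Fintype.card V ≤
      1 / (160 * d) * A'.card := by
    rw [hkε]
    have e1 := exp_six d
    have e2 : (640 * d : ℝ) ≤ 2 ^ (3 * d ^ 2) := by
      have : 640 * d ≤ 2 ^ (3 * d ^ 2) := by
        calc 640 * d ≤ 2 ^ 10 * 2 ^ d := Nat.mul_le_mul (by norm_num) Nat.lt_two_pow_self.le
          _ = 2 ^ (10 + d) := by rw [pow_add]
          _ ≤ _ := Nat.pow_le_pow_right (by norm_num) (by nlinarith)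
      exact_mod_cast this
    have e3 : Real.exp (-(6 * (d : ℝ) ^ 2)) * (2 ^ (5 * d ^ 2) * (640 * d)) ≤ 1 := by
      refine le_trans ?_ e1
      rw [show 8 * d ^ 2 = 5 * d ^ 2 + 3 * d ^ 2 by ring, pow_add]
      gcongr
    rw [one_div_mul_eq_div, le_div_iff₀ (by positivity)]
    calc 4 * Real.exp (-(6 * (d : ℝ) ^ 2)) * Fintype.card V * (160 * d)
        ≤ 4 * Real.exp (-(6 * (d : ℝ) ^ 2)) * (2 ^ (5 * d ^ 2) * A'.card) * (160 * d) := by gcongr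
      _ = Real.exp (-(6 * (d : ℝ) ^ 2)) * (2 ^ (5 * d ^ 2) * (640 * d)) * A'.card := by ring
      _ ≤ 1 * A'.card := by gcongr
      _ = _ := one_mul _
  obtain ⟨X, hXc, hXt⟩ := almost_periods A' hA' f (fun x => by simp only [hf]; split_ifs <;> norm_num)
    k hk1 (1 / (160 * d)) (by positivity) hke d
  have hX0 : (0 : ℝ) < X.card := lt_of_lt_of_le (by positivity) hXc
  have hX : X.Nonempty := by
    rw [← Finset.card_pos]; exact_mod_cast hX0
  have h3 := spec_mass A A' X hA hA' hX d hd hAc (fun t ht => by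
    have e1 := hXt t ht
    have e2 : 4 * (d : ℝ) * (1 / (160 * d)) = 1 / 40 := by field_simp; norm_num
    rw [e2] at e1
    refine le_trans ?_ (e1.trans (le_of_eq ?_))
    · linarith
    · simp only [hf])
  obtain ⟨x, hx⟩ := coset_incr A hA _ (by convert h3)
  refine ⟨_, x, ?_, hx⟩
  have h4 := chang X hX
  have h5 := Subspace.finrank_add_finrank_dualCoannihilator_eq (Submodule.span (ZMod 2) (spec X))
  set D := Module.finrank (ZMod 2) (Submodule.span (ZMod 2) (spec X))
  have h6 : (Fintype.card V : ℝ) ≤ 2 ^ (5 * d ^ 2 * k + 1) * X.card := by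
    have e1 := dens_pow hM0 hA'0 (5 * d ^ 2) k h1
    calc (Fintype.card V : ℝ) = Fintype.card V * 1 := by ring
      _ ≤ Fintype.card V * (2 ^ (5 * d ^ 2 * k) * ((A'.card : ℝ) / Fintype.card V) ^ k) := by gcongr
      _ = 2 ^ (5 * d ^ 2 * k + 1) *
          (1 / 2 * Fintype.card V * ((A'.card : ℝ) / Fintype.card V) ^ k) := by ring
      _ ≤ _ := by gcongr
  have h7 : Real.exp (D / 20) ≤ Real.exp ((5 * d ^ 2 * k + 1 : ℕ) : ℝ) := by
    have e1 : Real.exp (D / 20) ≤ 2 ^ (5 * d ^ 2 * k + 1) := by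
      refine le_of_mul_le_mul_left (h4.trans (h6.trans (le_of_eq (mul_comm _ _)))) hX0
    refine e1.trans ?_
    have e2 : Real.exp ((5 * d ^ 2 * k + 1 : ℕ) : ℝ) = Real.exp 1 ^ (5 * d ^ 2 * k + 1) := by
      rw [← Real.exp_nat_mul, mul_one]
    rw [e2]
    have := Real.exp_one_gt_d9
    gcongr
    linarith
  have h8 := Real.exp_le_exp.1 h7
  have h9 : D ≤ 20 * (5 * d ^ 2 * k + 1) := by
    have : (D : ℝ) ≤ 20 * ((5 * d ^ 2 * k + 1 : ℕ) : ℝ) := by linarith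
    exact_mod_cast this
  have h10 : 20 * (5 * d ^ 2 * k + 1) = 30720000 * d ^ 6 * 1 + 20 := by rw [hk]; ring_nf
  have h11 : 1 ≤ d ^ 6 := Nat.one_le_pow _ _ (by omega)
  omega

end core
end Claw

set_option linter.unusedSectionVars false
namespace Claw

section iteration
open Finset

theorem finrank_extend {V : Type*} [AddCommGroup V] [Module (ZMod 2) V] [Finite V]
    (Y : Submodule (ZMod 2) V) (v : V) (hv : v ∉ Y) :
    Module.finrank (ZMod 2) ↥(Y ⊔ Submodule.span (ZMod 2) {v}) = Module.finrank (ZMod 2) Y + 1 := by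
  have h1 := Submodule.finrank_sup_add_finrank_inf_eq Y (Submodule.span (ZMod 2) {v})
  have h2 : Y ⊓ Submodule.span (ZMod 2) {v} = ⊥ := by
    rw [eq_bot_iff]
    intro x hx
    obtain ⟨hxY, hxv⟩ := Submodule.mem_inf.1 hx
    obtain ⟨a, rfl⟩ := Submodule.mem_span_singleton.1 hxv
    have h : ∀ a : ZMod 2, a = 0 ∨ a = 1 := by decide
    rcases h a with rfl | rfl
    · simp
    · rw [one_smul] at hxY; exact absurd hxY hv
  have h3 : v ≠ 0 := fun h => hv (h ▸ Y.zero_mem)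
  rw [h2, finrank_bot, finrank_span_singleton h3] at h1
  omega

theorem density {V : Type*} [AddCommGroup V] [Module (ZMod 2) V] [Fintype V] [DecidableEq V]
    (F : Finset V) (h0 : (0 : V) ∉ F) (d : ℕ)
    (hd : d ≤ Module.finrank (ZMod 2) V)
    (hY : ∀ Y : Submodule (ZMod 2) V, Module.finrank (ZMod 2) Y = d → ∃ y ∈ Y, y ∈ F) :
    Fintype.card V ≤ 2 ^ d * F.card := by
  classical
  by_contra hcon
  push Not at hcon
  have hM : Fintype.card V = 2 ^ Module.finrank (ZMod 2) V := by
    rw [Module.card_eq_pow_finrank (K := ZMod 2) (V := V)]; simp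
  have key : ∀ j ≤ d, ∃ Y : Submodule (ZMod 2) V, Module.finrank (ZMod 2) Y = j ∧ ∀ y ∈ Y, y ∉ F := by
    intro j
    induction j with
    | zero =>
      intro _
      refine ⟨⊥, finrank_bot _ _, ?_⟩
      intro y hy
      rw [(Submodule.mem_bot _).1 hy]; exact h0
    | succ j ih =>
      intro hj
      obtain ⟨Y, hYj, hYF⟩ := ih (by omega)
      obtain ⟨v, hv⟩ : ∃ v : V, ∀ b ∈ insert 0 F, ∀ y ∈ Y, b + y ≠ v := by
        by_contra hall
        push Not at hall
        have hle : Fintype.card V ≤ ((insert 0 F) ×ˢ (Finset.univ.filter (· ∈ Y))).card := by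
          rw [← Finset.card_univ]
          refine Finset.card_le_card_of_surjOn (fun p => p.1 + p.2) ?_
          intro v _
          obtain ⟨b, hb, y, hy, hby⟩ := hall v
          refine ⟨(b, y), ?_, hby⟩
          rw [Finset.mem_coe, Finset.mem_product]
          exact ⟨hb, by simpa using hy⟩
        have hYc : (Finset.univ.filter (· ∈ Y)).card = 2 ^ j := by
          rw [← Fintype.card_subtype, ← Nat.card_eq_fintype_card]
          have := Module.natCard_eq_pow_finrank (K := ZMod 2) (V := Y)
          rw [hYj] at this
          simpa using this
        rw [Finset.card_product, hYc, Finset.card_insert_of_notMem h0] at hle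
        have hp : 2 ^ (j + 1) ≤ 2 ^ d := Nat.pow_le_pow_right (by norm_num) hj
        have hp' : 2 ^ d ≤ 2 ^ Module.finrank (ZMod 2) V := Nat.pow_le_pow_right (by norm_num) hd
        have hp0 : 0 < 2 ^ j := by positivity
        rw [pow_succ] at hp
        rcases Nat.eq_zero_or_pos F.card with hF | hF
        · rw [hF] at hle; omega
        · nlinarith
      have hvY : v ∉ Y := fun h => hv 0 (Finset.mem_insert_self _ _) v h (zero_add v)
      refine ⟨Y ⊔ Submodule.span (ZMod 2) {v}, by rw [finrank_extend Y v hvY, hYj], ?_⟩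
      intro y hy hyF
      obtain ⟨u, hu, w, hw, rfl⟩ := Submodule.mem_sup.1 hy
      obtain ⟨a, rfl⟩ := Submodule.mem_span_singleton.1 hw
      have h : ∀ a : ZMod 2, a = 0 ∨ a = 1 := by decide
      rcases h a with rfl | rfl
      · rw [zero_smul, add_zero] at hyF; exact hYF u hu hyF
      · rw [one_smul] at hyF
        refine hv (u + v) (Finset.mem_insert_of_mem hyF) u hu ?_
        have := c2 u; grind
  obtain ⟨Y, hYd, hYF⟩ := key d le_rfl
  obtain ⟨y, hy, hyF⟩ := hY Y hYd
  exact hYF y hy hyF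

theorem iteration (d : ℕ) (hd : 20 ≤ d) (m : ℕ) : ∀ (V : Type) [AddCommGroup V] [Module (ZMod 2) V]
    [Finite V] (A B : Set V), (0 : V) ∉ B → (∀ x ∈ A, ∀ y ∈ A, x + y ∉ B) →
    (∀ Y : Submodule (ZMod 2) V, Module.finrank (ZMod 2) Y = d → ∃ y ∈ Y, y ∈ B) →
    (Nat.card V : ℝ) ≤ (9 / 8) ^ m * Nat.card A → (Nat.card V : ℝ) ≤ 2 ^ d * Nat.card A →
    Module.finrank (ZMod 2) V ≤ d + m * (40000000 * d ^ 6) := by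
  classical
  induction m with
  | zero =>
    intro V _ _ _ A B h0 hAB hB hA _
    by_contra hcon
    have := Fintype.ofFinite V
    obtain ⟨b, hb⟩ : B.Nonempty := by
      by_contra hemp
      rw [Set.not_nonempty_iff_eq_empty] at hemp
      have := density (∅ : Finset V) (by simp) d (by omega) (by simpa [hemp] using hB)
      simp at this
    have huniv : A = Set.univ := by
      apply Set.eq_of_subset_of_ncard_le (Set.subset_univ _)
      rw [Set.ncard_univ]
      rw [pow_zero, one_mul] at hA
      exact_mod_cast hA
    exact hAB b (by simp [huniv]) 0 (by simp [huniv]) (by simpa using hb)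
  | succ m ih =>
    intro V _ _ _ A B h0 hAB hB hA hA2
    have := Fintype.ofFinite V
    rcases Nat.lt_or_ge (Module.finrank (ZMod 2) V) d with hlt | hge
    · have := Nat.zero_le ((m + 1) * (40000000 * d ^ 6)); omega
    have hAc : Nat.card A = A.toFinset.card := Nat.card_eq_card_toFinset A
    have hM0 : (0 : ℝ) < Fintype.card V := card_pos'
    rw [hAc, Nat.card_eq_fintype_card] at hA hA2
    have hden := density B.toFinset (by simpa using h0) d hge (by simpa using hB)
    have hA0 : (0 : ℝ) < A.toFinset.card := by
      by_contra hh
      have e : (A.toFinset.card : ℝ) = 0 := le_antisymm (not_lt.1 hh) (by positivity)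
      rw [e] at hA2; linarith
    obtain ⟨W, x, hW, hx⟩ := core_step A.toFinset B.toFinset
      (by rw [← Finset.card_pos]; exact_mod_cast hA0) d hd
      (fun z hz => by
        unfold cv
        refine Finset.sum_eq_zero fun t _ => ?_
        unfold ind
        split_ifs with h1 h2
        · exfalso
          refine hAB t (by simpa using h1) (t + z) (by simpa using h2) ?_
          rw [← add_assoc, c2, zero_add]; simpa using hz
        · simp
        · simp
        · simp) (by exact_mod_cast hden) hA2
    set a : ℝ := (Nat.card {w : W // x + (w : V) ∈ A.toFinset} : ℝ) with ha
    have ha0 : 0 ≤ a := by positivity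
    have key := ih W {w | x + (w : V) ∈ A} {w | (w : V) ∈ B} (by simpa using h0) (by
        intro u hu v hv huv
        refine hAB _ hu _ hv ?_
        have e : x + (u : V) + (x + (v : V)) = ((u + v : W) : V) := by
          rw [Submodule.coe_add]; have := c2 x; grind
        rw [e]; exact huv) (by
        intro Y hYd
        obtain ⟨y, hy, hyB⟩ := hB (Y.map W.subtype) (by
          rw [← hYd]
          exact LinearEquiv.finrank_eq (Submodule.equivMapOfInjective _ W.injective_subtype Y).symm)
        obtain ⟨w, hw, rfl⟩ := Submodule.mem_map.1 hy
        exact ⟨w, hw, hyB⟩)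
    have hcard : (Nat.card ({w : W | x + (w : V) ∈ A} : Set W) : ℝ) = a := by
      rw [ha]
      simp only [Set.mem_toFinset]
      rfl
    rw [hcard] at key
    have k1 := key (by
      have e1 : 9 / 8 * (A.toFinset.card : ℝ) * Nat.card W ≤
          9 / 8 * (A.toFinset.card : ℝ) * ((9 / 8) ^ m * a) := by
        calc _ ≤ a * Fintype.card V := hx
          _ ≤ a * ((9 / 8) ^ (m + 1) * A.toFinset.card) := by gcongr
          _ = _ := by ring
      exact le_of_mul_le_mul_left e1 (by positivity)) (by
      have e1 : (A.toFinset.card : ℝ) * Nat.card W ≤ (A.toFinset.card : ℝ) * (2 ^ d * a) := by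
        calc _ ≤ 9 / 8 * (A.toFinset.card : ℝ) * Nat.card W := by
              have : 0 ≤ (A.toFinset.card : ℝ) * Nat.card W := by positivity
              linarith
          _ ≤ a * Fintype.card V := hx
          _ ≤ a * (2 ^ d * A.toFinset.card) := by gcongr
          _ = _ := by ring
      exact le_of_mul_le_mul_left e1 hA0)
    rw [add_mul, one_mul]
    omega

theorem sumFreeBound : SumFreeBound 240000001 := by
  classical
  intro V _ _ _ F h0 hF d hd hY
  have := Fintype.ofFinite V
  have hd7 : d ≤ d ^ 7 := Nat.le_self_pow (by norm_num) d
  rcases Nat.lt_or_ge (Module.finrank (ZMod 2) V) d with hlt | hge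
  · omega
  have hden := density F.toFinset (by simpa using h0) d hge (by simpa using hY)
  have hFc : Nat.card F = F.toFinset.card := Nat.card_eq_card_toFinset F
  have h2 : (Nat.card V : ℝ) ≤ 2 ^ d * Nat.card F := by
    rw [hFc, Nat.card_eq_fintype_card]; exact_mod_cast hden
  have h3 := iteration d hd (6 * d) V F F h0 hF hY (h2.trans (by
    gcongr
    rw [pow_mul]
    gcongr
    norm_num)) h2
  have h4 : 6 * d * (40000000 * d ^ 6) = 240000000 * d ^ 7 := by ring
  omega

end iteration
end Claw

namespace Claw

theorem single_iff (v : Fin 3 → ZMod 2) : (∃ i : Fin 3, v = Pi.single i 1) ↔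
    (v = ![1,0,0] ∨ v = ![0,1,0] ∨ v = ![0,0,1]) := by
  have e0 : (Pi.single 0 1 : Fin 3 → ZMod 2) = ![1,0,0] := by decide
  have e1 : (Pi.single 1 1 : Fin 3 → ZMod 2) = ![0,1,0] := by decide
  have e2 : (Pi.single 2 1 : Fin 3 → ZMod 2) = ![0,0,1] := by decide
  constructor
  · rintro ⟨i, rfl⟩
    fin_cases i
    · left; exact e0
    · right; left; exact e1
    · right; right; exact e2
  · rintro (h | h | h)
    · exact ⟨0, h.trans e0.symm⟩
    · exact ⟨1, h.trans e1.symm⟩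
    · exact ⟨2, h.trans e2.symm⟩

end Claw

/-- There is a constant `C > 0` such that every claw-free 2-colouring of the nonzero
vectors of `𝔽₂ⁿ` admits a subspace of dimension at least `C n^{1/7}` on whose nonzero
vectors the colouring is constant. -/
theorem stmt8 :
    ∃ C : ℝ, 0 < C ∧ ∀ (n : ℕ) (c : (Fin n → ZMod 2) → Fin 2),
      (¬ ∃ φ : (Fin 3 → ZMod 2) →ₗ[ZMod 2] (Fin n → ZMod 2),
        Function.Injective φ ∧ ∀ v : Fin 3 → ZMod 2, v ≠ 0 → c (φ v) = clawColouring v) →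
      ∃ W : Submodule (ZMod 2) (Fin n → ZMod 2),
        C * (n : ℝ) ^ ((1 : ℝ) / 7) ≤ (Module.finrank (ZMod 2) W : ℝ) ∧
        ∀ v ∈ W, v ≠ 0 → ∀ w ∈ W, w ≠ 0 → c v = c w := by
  refine Claw.final_of_bound Claw.sumFreeBound clawColouring ?_ ?_
  · intro v _ hv
    unfold clawColouring
    rw [if_pos ((Claw.single_iff v).2 hv)]
  · intro v _ hv
    unfold clawColouring
    rw [if_neg (fun h => hv ((Claw.single_iff v).1 h))]
end

section
/- Let F be a field and let v : F → ℝ ∪ {∞} be a non-Archimedean valuation, i.e., v(x) = ∞ if and only if x = 0, v(ab) = v(a) + v(b) for all a, b, and v(a + b) ≥ min(v(a), v(b)) for all a, b. For n ≥ 1 and a nonzero vector u = (u₁, …, u_n) ∈ Fⁿ, let c_v(u) be the smallest index s ∈ {1, …, n} such that v(u_s) = min_{1 ≤ i ≤ n} v(u_i). If x¹, …, x^t ∈ Fⁿ ∖ {0} are nonzero vectors with c_v(x¹) < c_v(x²) < … < c_v(x^t), then x¹, …, x^t are linearly independent over F. -/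
/-- Let `v` be a non-Archimedean valuation on a field `F`. If `x¹, …, x^t` are
nonzero vectors in `Fⁿ` whose colours `c_v(x¹) < … < c_v(x^t)` are strictly
increasing, where `c_v(u)` is the least index attaining `min_i v(u_i)`, then
`x¹, …, x^t` are linearly independent. Here the indices `k j = c_v(x j)` are
characterised by: `v (x j (k j))` is minimal among all coordinates, and strictly
smaller than `v (x j i)` for all earlier indices `i < k j`. -/
theorem stmt19 {F : Type*} [Field F] (v : F → WithTop ℝ)
    (hv0 : ∀ x : F, v x = ⊤ ↔ x = 0)
    (hvmul : ∀ a b : F, v (a * b) = v a + v b)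
    (hvadd : ∀ a b : F, min (v a) (v b) ≤ v (a + b))
    {n t : ℕ} (x : Fin t → (Fin n → F)) (hx : ∀ j, x j ≠ 0)
    (k : Fin t → Fin n) (hk : StrictMono k)
    (hmin : ∀ j : Fin t, (∀ i : Fin n, v (x j (k j)) ≤ v (x j i)) ∧
      (∀ i : Fin n, i < k j → v (x j (k j)) < v (x j i))) :
    LinearIndependent F x := by
  classical
  have hv1 : v 1 = 0 := by
    have h := hvmul 1 1
    have hn : v 1 ≠ ⊤ := by simp [hv0]
    lift v 1 to ℝ using hn with r hr
    rw [mul_one, ← hr] at h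
    norm_cast at h ⊢
    linarith
  have hvn1 : v (-1) = 0 := by
    have h := hvmul (-1) (-1)
    have hn : v (-1) ≠ ⊤ := by simp [hv0]
    rw [neg_one_mul, neg_neg, hv1] at h
    lift v (-1) to ℝ using hn with r hr
    norm_cast at h ⊢
    linarith
  have hneg : ∀ a, v (-a) = v a := by
    intro a
    rw [← neg_one_mul, hvmul, hvn1, zero_add]
  have hsum : ∀ (s : Finset (Fin t)) (f : Fin t → F) (m : WithTop ℝ), m < ⊤ →
      (∀ j ∈ s, m < v (f j)) → m < v (∑ j ∈ s, f j) := by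
    intro s f m hm
    induction s using Finset.induction_on with
    | empty => intro _; simpa [(hv0 0).2 rfl] using hm
    | insert a s ha ih =>
      intro h
      rw [Finset.sum_insert ha]
      refine lt_of_lt_of_le (lt_min (h a (Finset.mem_insert_self _ _)) (ih ?_)) (hvadd _ _)
      intro j hj
      exact h j (Finset.mem_insert_of_mem hj)
  have hfin : ∀ j, v (x j (k j)) ≠ ⊤ := by
    intro j htop
    apply hx j
    funext i
    have h := (hmin j).1 i
    rw [htop, top_le_iff, hv0] at h
    exact h
  rw [Fintype.linearIndependent_iff]
  intro g hg
  by_contra! hne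
  obtain ⟨i0, hi0⟩ := hne
  obtain ⟨j0, -, hj0⟩ := Finset.exists_min_image Finset.univ
    (fun j => toLex (v (g j) + v (x j (k j)), j)) ⟨i0, Finset.mem_univ _⟩
  have hle : ∀ j, v (g j0) + v (x j0 (k j0)) ≤ v (g j) + v (x j (k j)) := by
    intro j
    have h := hj0 j (Finset.mem_univ _)
    rw [Prod.Lex.toLex_le_toLex] at h
    rcases h with h | h
    · exact h.le
    · exact h.1.le
  have hlt : ∀ j, j < j0 → v (g j0) + v (x j0 (k j0)) < v (g j) + v (x j (k j)) := by
    intro j hj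
    have h := hj0 j (Finset.mem_univ _)
    rw [Prod.Lex.toLex_le_toLex] at h
    rcases h with h | h
    · exact h
    · exact absurd h.2 (not_le.2 hj)
  have hmt : v (g j0) + v (x j0 (k j0)) < ⊤ := by
    refine lt_of_le_of_lt (hle i0) ?_
    rw [WithTop.add_lt_top]
    exact ⟨lt_top_iff_ne_top.2 (by rwa [Ne, hv0]), lt_top_iff_ne_top.2 (hfin i0)⟩
  have hc : ∑ j, g j * x j (k j0) = 0 := by
    have h := congrFun hg (k j0)
    simpa using h
  rw [← Finset.add_sum_erase _ _ (Finset.mem_univ j0)] at hc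
  have h1 := hsum (Finset.univ.erase j0) (fun j => g j * x j (k j0)) _ hmt (by
    intro j hj
    rw [hvmul]
    rcases lt_or_gt_of_ne (Finset.ne_of_mem_erase hj) with h | h
    · exact lt_of_lt_of_le (hlt j h) (by gcongr; exact (hmin j).1 _)
    · by_cases hgj : v (g j) = ⊤
      · rw [hgj, WithTop.top_add]; exact hmt
      · exact lt_of_le_of_lt (hle j)
          (WithTop.add_lt_add_left hgj ((hmin j).2 _ (hk h))))
  rw [eq_neg_of_add_eq_zero_right hc, hneg, hvmul] at h1
  exact lt_irrefl _ h1
end
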